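/- arXiv:alg-geom/9601012 — 4 statements merged into one kernel-verified Lean document; each statement's English description precedes it below -/
import Mathlib

section
/- Let φ : Λᵃ → Λᵇ be a homomorphism of free left Λ-modules of finite rank whose image is contained in 𝔪·Λᵇ. Then the following are equivalent: (i) φ = 0; (ii) the cokernel Λᵇ/φ(Λᵃ) is a free Λ-module; (iii) the kernel of φ is a free Λ-module. -/
/-!
Statement 12: for a homomorphism `φ : Λᵃ → Λᵇ` of free `Λ`-modules of finite rank whose image
lies in `𝔪·Λᵇ` (where `𝔪` is the kernel of the augmentation `Λ → ℂ`), the following are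
equivalent: `φ = 0`; the cokernel of `φ` is a free `Λ`-module; the kernel of `φ` is a free
`Λ`-module.
-/

noncomputable section

/-- `Λ n`: the exterior algebra of `ℂⁿ` (with its `n` odd generators `βᵢ`). -/
abbrev SuperAlg (n : ℕ) : Type := ExteriorAlgebra ℂ (Fin n → ℂ)

/-- `Λ` regarded as a left module over itself by left multiplication.  (This is exactly
Mathlib's canonical `Semiring.toModule`; we register it explicitly since instance search
does not fire automatically for the `CliffordAlgebra`-based definition.) -/
instance (n : ℕ) : Module (SuperAlg n) (SuperAlg n) := Semiring.toModule

/-- The maximal ideal `𝔪` of nilpotents of `Λ`: the (two-sided) ideal generated by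
`β₁, …, βₙ`, i.e. the kernel of the augmentation `Λ → ℂ`. -/
def mIdeal (n : ℕ) : Ideal (SuperAlg n) :=
  RingHom.ker (ExteriorAlgebra.algebraMapInv (R := ℂ) (M := Fin n → ℂ))


section Abstract

variable {k A : Type*} [Field k] [Ring A] [Algebra k A] {n : ℕ}

theorem exists_soc {M : Type*} [AddCommGroup M] [Module A M] (β : Fin n → A)
    (hsq : ∀ i, β i * β i = 0) (hac : ∀ i j, β i * β j = - (β j * β i))
    (y : M) (hy : y ≠ 0) : ∃ l : A, l • y ≠ 0 ∧ ∀ i, β i • l • y = 0 := by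
  have key : ∀ s : Finset (Fin n), ∃ l : A, l • y ≠ 0 ∧ ∀ i ∈ s, β i • l • y = 0 := by
    intro s
    induction s using Finset.induction_on with
    | empty => exact ⟨1, by simpa using hy, by simp⟩
    | insert j s _ ih =>
      obtain ⟨l, hl, hs⟩ := ih
      by_cases h : β j • l • y = 0
      · refine ⟨l, hl, fun i hi => ?_⟩
        rcases Finset.mem_insert.1 hi with rfl | hi
        · exact h
        · exact hs i hi
      · refine ⟨β j * l, by rwa [mul_smul], fun i hi => ?_⟩
        rw [mul_smul]
        rcases Finset.mem_insert.1 hi with rfl | hi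
        · rw [smul_smul, hsq, zero_smul]
        · rw [smul_smul, hac, neg_smul, mul_smul, hs i hi, smul_zero, neg_zero]
  obtain ⟨l, hl, h⟩ := key Finset.univ
  exact ⟨l, hl, fun i => h i (Finset.mem_univ i)⟩

/-- elements killed by all `β i` -/
def socl (k : Type*) {A : Type*} [Field k] [Ring A] [Algebra k A] {n : ℕ} (β : Fin n → A)
    (M : Type*) [AddCommGroup M] [Module A M] [Module k M] [IsScalarTower k A M] :
    Submodule k M where
  carrier := {x | ∀ i, β i • x = 0}
  add_mem' := fun {x y} hx hy i => by rw [smul_add, hx i, hy i, add_zero]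
  zero_mem' := fun i => smul_zero _
  smul_mem' := fun c x hx i => by
    rw [smul_algebra_smul_comm, hx i, smul_zero]

theorem mem_socl {β : Fin n → A} {M : Type*} [AddCommGroup M] [Module A M] [Module k M]
    [IsScalarTower k A M] {x : M} : x ∈ socl k β M ↔ ∀ i, β i • x = 0 := Iff.rfl

/-- the socle of a free module -/
def soclEquiv {β : Fin n → A} {M : Type*} [AddCommGroup M] [Module A M] [Module k M]
    [IsScalarTower k A M] {ι : Type*} [Fintype ι] (b : Module.Basis ι A M) :
    socl k β M ≃ₗ[k] (ι → socl k β A) where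
  toFun x i := ⟨b.equivFun x.1 i, fun j => by
    have := congrFun (congrArg b.equivFun (x.2 j)) i
    simpa only [map_smul, map_zero, Pi.smul_apply, Pi.zero_apply] using this⟩
  invFun f := ⟨b.equivFun.symm (fun i => (f i).1), fun j => by
    rw [← map_smul]
    have : (β j • fun i => (f i).1) = 0 := by
      funext i
      exact (f i).2 j
    rw [this, map_zero]⟩
  left_inv x := by
    apply Subtype.ext
    exact b.equivFun.symm_apply_apply x.1
  right_inv f := by
    funext i
    apply Subtype.ext
    exact congrFun (b.equivFun.apply_symm_apply (fun i => (f i).1)) i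
  map_add' x y := by
    funext i
    apply Subtype.ext
    simp
  map_smul' c x := by
    funext i
    apply Subtype.ext
    have : b.equivFun (c • x.1) = c • b.equivFun x.1 := by
      rw [← algebraMap_smul A c x.1, map_smul, algebraMap_smul]
    exact congrFun this i

theorem abs_ker [Module.Finite k A] [Nontrivial A] (β : Fin n → A)
    (hsq : ∀ i, β i * β i = 0) (hac : ∀ i j, β i * β j = - (β j * β i))
    (m : Set A) (hs : ∀ s : A, (∀ i, β i * s = 0) → ∀ x ∈ m, s * x = 0)
    {a b : ℕ} (φ : (Fin a → A) →ₗ[A] (Fin b → A)) (hφ : ∀ x i, φ x i ∈ m)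
    (hf : Module.Free A (LinearMap.ker φ)) : φ = 0 := by
  classical
  let K := LinearMap.ker φ
  have hfinK : Module.Finite k K :=
    inferInstanceAs (Module.Finite k (K.restrictScalars k))
  let B := Module.Free.chooseBasis A K
  have : Module.Finite A K := Module.Finite.of_restrictScalars_finite k A K
  let ι := Module.Free.ChooseBasisIndex A K
  have : Fintype ι := inferInstance
  have hsoc : ∀ x : Fin a → A, (∀ i, β i • x = 0) → φ x = 0 := by
    intro x hx
    rw [pi_eq_sum_univ' x, map_sum]
    refine Finset.sum_eq_zero fun j _ => ?_
    rw [map_smul]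
    funext i
    exact hs (x j) (fun l => congrFun (hx l) j) _ (hφ _ i)
  have e1 := (soclEquiv (k := k) (β := β) (Pi.basisFun A (Fin a))).finrank_eq
  have e2 := (soclEquiv (k := k) (β := β) B).finrank_eq
  rw [Module.finrank_pi_fintype] at e1 e2
  have spos : 0 < Module.finrank k (socl k β A) := by
    obtain ⟨l, hl, h⟩ := exists_soc β hsq hac (1 : A) one_ne_zero
    have : Nontrivial (socl k β A) := ⟨⟨⟨l • 1, h⟩, 0, fun h => hl (congrArg Subtype.val h)⟩⟩
    exact Module.finrank_pos
  let g : socl k β (Fin a → A) →ₗ[k] socl k β K :=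
    { toFun := fun x => ⟨⟨x.1, hsoc x.1 x.2⟩, fun j => Subtype.ext (x.2 j)⟩
      map_add' := fun _ _ => rfl
      map_smul' := fun _ _ => rfl }
  have hg : Function.Injective g := fun x y h =>
    Subtype.ext (congrArg (fun z => z.1.1) h)
  have hle := LinearMap.finrank_le_finrank_of_injective hg
  rw [e1, e2] at hle
  simp only [Finset.sum_const, Finset.card_univ, smul_eq_mul, Fintype.card_fin] at hle
  have hcard := Nat.le_of_mul_le_mul_right hle spos
  have e3 : Module.finrank k K = Fintype.card ι * Module.finrank k A := by
    rw [((B.equivFun).restrictScalars k).finrank_eq, Module.finrank_pi_fintype]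
    simp [ι]
  have e4 : Module.finrank k (Fin a → A) = a * Module.finrank k A := by
    rw [Module.finrank_pi_fintype]
    simp
  have htop : K.restrictScalars k = ⊤ := by
    apply Submodule.eq_top_of_finrank_eq
    apply le_antisymm (Submodule.finrank_le _)
    change _ ≤ Module.finrank k K
    rw [e3, e4]
    exact Nat.mul_le_mul_right _ hcard
  refine LinearMap.ext fun x => ?_
  have : x ∈ K.restrictScalars k := htop ▸ Submodule.mem_top
  exact this

theorem abs_coker (β : Fin n → A)
    (hsq : ∀ i, β i * β i = 0) (hac : ∀ i j, β i * β j = - (β j * β i))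
    (m : Set A) (hs : ∀ s : A, (∀ i, β i * s = 0) → ∀ x ∈ m, s * x = 0)
    {a b : ℕ} (φ : (Fin a → A) →ₗ[A] (Fin b → A)) (hφ : ∀ x i, φ x i ∈ m)
    (hf : Module.Free A ((Fin b → A) ⧸ LinearMap.range φ)) : φ = 0 := by
  classical
  obtain ⟨s, hsec⟩ := Module.projective_lifting_property (LinearMap.range φ).mkQ
    LinearMap.id (Submodule.mkQ_surjective _)
  have he : ∀ y, y - s ((LinearMap.range φ).mkQ y) ∈ LinearMap.range φ := by
    intro y
    rw [← Submodule.Quotient.mk_eq_zero, ← Submodule.mkQ_apply, map_sub]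
    have := LinearMap.congr_fun hsec ((LinearMap.range φ).mkQ y)
    simp only [LinearMap.comp_apply, LinearMap.id_apply] at this
    rw [this, sub_self]
  let e : (Fin b → A) →ₗ[A] (Fin b → A) := LinearMap.id - s ∘ₗ (LinearMap.range φ).mkQ
  have hem : ∀ y i, e y i ∈ m := by
    intro y i
    obtain ⟨x, hx⟩ := he y
    have : e y = φ x := hx.symm
    rw [this]
    exact hφ x i
  have hefix : ∀ y ∈ LinearMap.range φ, e y = y := by
    intro y hy
    have : (LinearMap.range φ).mkQ y = 0 := by
      rwa [← LinearMap.mem_ker, Submodule.ker_mkQ]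
    simp only [e, LinearMap.sub_apply, LinearMap.comp_apply, LinearMap.id_apply, this, map_zero,
      sub_zero]
  refine LinearMap.ext fun x => ?_
  by_contra hne
  obtain ⟨l, hl, h⟩ := exists_soc β hsq hac (φ x) hne
  apply hl
  have hmem : l • φ x ∈ LinearMap.range φ := Submodule.smul_mem _ _ ⟨x, rfl⟩
  rw [← hefix _ hmem]
  generalize l • φ x = z at h
  rw [pi_eq_sum_univ' z, map_sum]
  refine Finset.sum_eq_zero fun j _ => ?_
  rw [map_smul]
  funext i
  exact hs (z j) (fun l => congrFun (h l) j) _ (hem _ i)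

theorem abs_main [Module.Finite k A] [Nontrivial A] (β : Fin n → A)
    (hsq : ∀ i, β i * β i = 0) (hac : ∀ i j, β i * β j = - (β j * β i))
    (m : Set A) (hs : ∀ s : A, (∀ i, β i * s = 0) → ∀ x ∈ m, s * x = 0)
    {a b : ℕ} (φ : (Fin a → A) →ₗ[A] (Fin b → A)) (hφ : ∀ x i, φ x i ∈ m) :
    (φ = 0 ↔ Module.Free A ((Fin b → A) ⧸ LinearMap.range φ)) ∧
    (φ = 0 ↔ Module.Free A (LinearMap.ker φ)) := by
  refine ⟨⟨?_, abs_coker β hsq hac m hs φ hφ⟩, ⟨?_, abs_ker (k := k) β hsq hac m hs φ hφ⟩⟩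
  · intro h
    exact Module.Free.of_equiv
      (Submodule.quotEquivOfEqBot (LinearMap.range φ) (by rw [h, LinearMap.range_zero])).symm
  · intro h
    exact Module.Free.of_equiv
      (LinearEquiv.ofTop (LinearMap.ker φ) (by rw [h, LinearMap.ker_zero])).symm

end Abstract

theorem ext_swap (n : ℕ) (v : Fin n → ℂ) (x : SuperAlg n) :
    ExteriorAlgebra.ι ℂ v * x = CliffordAlgebra.involute x * ExteriorAlgebra.ι ℂ v := by
  induction x using ExteriorAlgebra.induction with
  | algebraMap r => rw [AlgHom.commutes, Algebra.commutes]
  | ι w =>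
    have h1 : CliffordAlgebra.involute (ExteriorAlgebra.ι ℂ w) = - ExteriorAlgebra.ι ℂ w :=
      CliffordAlgebra.involute_ι w
    rw [h1, neg_mul]
    exact eq_neg_of_add_eq_zero_left (ExteriorAlgebra.ι_add_mul_swap v w)
  | mul a b ha hb => rw [map_mul, ← mul_assoc, ha, mul_assoc, hb, mul_assoc]
  | add a b ha hb => rw [map_add, mul_add, add_mul, ha, hb]

theorem ext_soc (n : ℕ) (s : SuperAlg n)
    (h : ∀ i : Fin n, ExteriorAlgebra.ι ℂ (Pi.single i (1 : ℂ)) * s = 0) (x : SuperAlg n) :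
    s * x = s * algebraMap ℂ (SuperAlg n) (ExteriorAlgebra.algebraMapInv x) := by
  have h1 : ∀ v : Fin n → ℂ, ExteriorAlgebra.ι ℂ v * s = 0 := by
    intro v
    rw [pi_eq_sum_univ' v, map_sum, Finset.sum_mul]
    refine Finset.sum_eq_zero fun i _ => ?_
    have : (fun j => if i = j then (1 : ℂ) else 0) = Pi.single i (1 : ℂ) := by
      funext j
      simp [Pi.single_apply, eq_comm]
    rw [map_smul, smul_mul_assoc]
    first
      | rw [h i, smul_zero]
      | rw [this, h i, smul_zero]
  have h2 : ∀ v : Fin n → ℂ, s * ExteriorAlgebra.ι ℂ v = 0 := by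
    intro v
    have h3 := ext_swap n v s
    rw [h1 v] at h3
    have h4 := congrArg CliffordAlgebra.involute h3
    have h5 : CliffordAlgebra.involute (ExteriorAlgebra.ι ℂ v) = - ExteriorAlgebra.ι ℂ v :=
      CliffordAlgebra.involute_ι v
    rw [map_zero, map_mul, CliffordAlgebra.involute_involute, h5, mul_neg] at h4
    exact neg_eq_zero.1 h4.symm
  induction x using ExteriorAlgebra.induction with
  | algebraMap r => rw [AlgHom.commutes]; rfl
  | ι w =>
    have : ExteriorAlgebra.algebraMapInv (ExteriorAlgebra.ι ℂ w) = (0 : ℂ) := by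
      simp [ExteriorAlgebra.algebraMapInv]
    rw [h2, this, map_zero, mul_zero]
  | mul a b ha hb =>
    rw [map_mul, map_mul, ← mul_assoc, ha, ← mul_assoc, ← Algebra.commutes, mul_assoc, hb,
      ← mul_assoc, Algebra.commutes, mul_assoc]
  | add a b ha hb => rw [map_add, map_add, mul_add, mul_add, ha, hb]

/-- Let `φ : Λᵃ → Λᵇ` be a homomorphism of free left `Λ`-modules of finite
rank whose image is contained in `𝔪·Λᵇ`.  Then the following are equivalent: (i) `φ = 0`;
(ii) the cokernel `Λᵇ/φ(Λᵃ)` is a free `Λ`-module; (iii) the kernel of `φ` is a free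
`Λ`-module. -/
theorem statement12 (n a b : ℕ)
    (φ : (Fin a → SuperAlg n) →ₗ[SuperAlg n] (Fin b → SuperAlg n))
    (hφ : ∀ (x : Fin a → SuperAlg n) (i : Fin b), φ x i ∈ mIdeal n) :
    (φ = 0 ↔ Module.Free (SuperAlg n) ((Fin b → SuperAlg n) ⧸ LinearMap.range φ)) ∧
    (φ = 0 ↔ Module.Free (SuperAlg n) (LinearMap.ker φ)) := by
  haveI : Module.Finite ℂ (SuperAlg n) :=
    Module.Finite.of_basis (Pi.basisFun ℂ (Fin n)).ExteriorAlgebra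
  exact abs_main (k := ℂ) (fun i : Fin n => ExteriorAlgebra.ι ℂ (Pi.single i (1 : ℂ)))
    (fun i => ExteriorAlgebra.ι_sq_zero _)
    (fun i j => eq_neg_of_add_eq_zero_left (ExteriorAlgebra.ι_add_mul_swap _ _))
    (mIdeal n : Set (SuperAlg n))
    (fun s h x hx => by
      have hx' : ExteriorAlgebra.algebraMapInv x = (0 : ℂ) := hx
      rw [ext_soc n s h x, hx', map_zero, mul_zero]) φ hφ

end
end

section
/- Let A be an even (k|l)-supermatrix over Λ with invertible odd-odd block Y, and fix an even row index i ≤ k. For a row vector u ∈ Λ₀ᵏ × Λ₁ˡ (first k entries even, last l entries odd), let A_{i←u} denote the even supermatrix obtained from A by replacing its i-th row with u (its odd-odd block is still Y). Then the map u ↦ ber(A_{i←u}) is additive, and ber(A_{i←λ·u}) = λ·ber(A_{i←u}) for every λ ∈ Λ₀. Likewise, if the even-even block X of A is invertible and i > k is an odd row index, then for row vectors u ∈ Λ₁ᵏ × Λ₀ˡ the map u ↦ ber*(A_{i←u}) is additive and satisfies ber*(A_{i←λ·u}) = λ·ber*(A_{i←u}) for λ ∈ Λ₀. -/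
noncomputable section

open ExteriorAlgebra

/-- The even part `Λ₀` of the exterior algebra, i.e. the degree-`0̄` part of its `ℤ₂`-grading. -/
def evenPart (n : ℕ) : Submodule ℂ (SuperAlg n) :=
  CliffordAlgebra.evenOdd (0 : QuadraticForm ℂ (Fin n → ℂ)) 0

/-- The odd part `Λ₁` of the exterior algebra, i.e. the degree-`1̄` part of its `ℤ₂`-grading. -/
def oddPart (n : ℕ) : Submodule ℂ (SuperAlg n) :=
  CliffordAlgebra.evenOdd (0 : QuadraticForm ℂ (Fin n → ℂ)) 1

/-- The determinant of a square matrix over a (possibly noncommutative) ring, given by the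
Leibniz formula, the product over each permutation being taken in the canonical order of the
index set.  For matrices whose entries lie in a central commutative subring (such as `Λ₀ ⊆ Λ`)
this is the usual determinant. -/
def ncdet {R : Type*} [Ring R] {k : ℕ} (M : Matrix (Fin k) (Fin k) R) : R :=
  ∑ σ : Equiv.Perm (Fin k), ((Equiv.Perm.sign σ : ℤˣ) : ℤ) • (List.ofFn fun i => M (σ i) i).prod

/-- The even-even block `X` of a `(k|l)`-block matrix. -/
def Xblk (n k l : ℕ) (A : Matrix (Fin (k + l)) (Fin (k + l)) (SuperAlg n)) :
    Matrix (Fin k) (Fin k) (SuperAlg n) :=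
  fun i j => A (Fin.castAdd l i) (Fin.castAdd l j)

/-- The even-odd block `α` of a `(k|l)`-block matrix. -/
def alphaBlk (n k l : ℕ) (A : Matrix (Fin (k + l)) (Fin (k + l)) (SuperAlg n)) :
    Matrix (Fin k) (Fin l) (SuperAlg n) :=
  fun i j => A (Fin.castAdd l i) (Fin.natAdd k j)

/-- The odd-even block `β` of a `(k|l)`-block matrix. -/
def betaBlk (n k l : ℕ) (A : Matrix (Fin (k + l)) (Fin (k + l)) (SuperAlg n)) :
    Matrix (Fin l) (Fin k) (SuperAlg n) :=
  fun i j => A (Fin.natAdd k i) (Fin.castAdd l j)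

/-- The odd-odd block `Y` of a `(k|l)`-block matrix. -/
def Yblk (n k l : ℕ) (A : Matrix (Fin (k + l)) (Fin (k + l)) (SuperAlg n)) :
    Matrix (Fin l) (Fin l) (SuperAlg n) :=
  fun i j => A (Fin.natAdd k i) (Fin.natAdd k j)

/-- `A` is an even `(k|l)`-supermatrix: the diagonal blocks `X`, `Y` have entries in `Λ₀` and
the off-diagonal blocks `α`, `β` have entries in `Λ₁`. -/
def IsEvenSupermatrix (n k l : ℕ) (A : Matrix (Fin (k + l)) (Fin (k + l)) (SuperAlg n)) : Prop :=
  (∀ i j, Xblk n k l A i j ∈ evenPart n) ∧ (∀ i j, Yblk n k l A i j ∈ evenPart n) ∧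
  (∀ i j, alphaBlk n k l A i j ∈ oddPart n) ∧ (∀ i j, betaBlk n k l A i j ∈ oddPart n)

/-- The Berezinian `ber(A) = det(X − α·Y⁻¹·β)·det(Y)⁻¹` (defined when `Y` is invertible). -/
def ber (n k l : ℕ) (A : Matrix (Fin (k + l)) (Fin (k + l)) (SuperAlg n)) : SuperAlg n :=
  ncdet (Xblk n k l A - alphaBlk n k l A * Ring.inverse (Yblk n k l A) * betaBlk n k l A) *
    Ring.inverse (ncdet (Yblk n k l A))

/-- The inverse Berezinian `ber*(A) = det(X)⁻¹·det(Y − β·X⁻¹·α)` (defined when `X` is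
invertible). -/
def berStar (n k l : ℕ) (A : Matrix (Fin (k + l)) (Fin (k + l)) (SuperAlg n)) : SuperAlg n :=
  Ring.inverse (ncdet (Xblk n k l A)) *
    ncdet (Yblk n k l A - betaBlk n k l A * Ring.inverse (Xblk n k l A) * alphaBlk n k l A)

/-- A row vector of even parity: its first `k` entries lie in `Λ₀` and its last `l` entries lie
in `Λ₁`. -/
def EvenRowVec (n k l : ℕ) (u : Fin (k + l) → SuperAlg n) : Prop :=
  (∀ j : Fin k, u (Fin.castAdd l j) ∈ evenPart n) ∧
  (∀ j : Fin l, u (Fin.natAdd k j) ∈ oddPart n)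

/-- A row vector of odd parity: its first `k` entries lie in `Λ₁` and its last `l` entries lie
in `Λ₀`. -/
def OddRowVec (n k l : ℕ) (u : Fin (k + l) → SuperAlg n) : Prop :=
  (∀ j : Fin k, u (Fin.castAdd l j) ∈ oddPart n) ∧
  (∀ j : Fin l, u (Fin.natAdd k j) ∈ evenPart n)

lemma ncdet_aux_upd {R : Type*} [Ring R] {k : ℕ} (M : Matrix (Fin k) (Fin k) R) (r : Fin k)
    (v : Fin k → R) (σ : Equiv.Perm (Fin k)) :
    (fun i => (M.updateRow r v) (σ i) i) =
      Function.update (fun i => M (σ i) i) (σ.symm r) (v (σ.symm r)) := by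
  funext i
  by_cases h : i = σ.symm r
  · subst h; simp
  · have h2 : σ i ≠ r := fun h' => h (by rw [← h']; simp)
    simp [Matrix.updateRow_ne h2, Function.update_of_ne h]

lemma ncdet_updateRow_add {R : Type*} [Ring R] {k : ℕ} (M : Matrix (Fin k) (Fin k) R)
    (r : Fin k) (u v : Fin k → R) :
    ncdet (M.updateRow r (u + v)) = ncdet (M.updateRow r u) + ncdet (M.updateRow r v) := by
  unfold ncdet
  rw [← Finset.sum_add_distrib]
  refine Finset.sum_congr rfl fun σ _ => ?_
  rw [← smul_add, ncdet_aux_upd, ncdet_aux_upd, ncdet_aux_upd]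
  congr 1
  have := (MultilinearMap.mkPiAlgebraFin ℤ k R).map_update_add (fun i => M (σ i) i)
    (σ.symm r) (u (σ.symm r)) (v (σ.symm r))
  exact this

lemma ncdet_updateRow_mul {R : Type*} [Ring R] {k : ℕ} (M : Matrix (Fin k) (Fin k) R)
    (r : Fin k) (u : Fin k → R) (lam : R) (hl : lam ∈ Subring.center R) :
    ncdet (M.updateRow r (fun j => lam * u j)) = lam * ncdet (M.updateRow r u) := by
  unfold ncdet
  rw [Finset.mul_sum]
  refine Finset.sum_congr rfl fun σ _ => ?_
  rw [mul_smul_comm, ncdet_aux_upd, ncdet_aux_upd]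
  congr 1
  have := (MultilinearMap.mkPiAlgebraFin (Subring.center R) k R).map_update_smul
    (fun i => M (σ i) i) (σ.symm r) ⟨lam, hl⟩ (u (σ.symm r))
  exact this

lemma evenPart_central (n : ℕ) (x : SuperAlg n) (hx : x ∈ evenPart n) :
    x ∈ Subring.center (SuperAlg n) := by
  have anti : ∀ u v : Fin n → ℂ, ι ℂ u * ι ℂ v = -(ι ℂ v * ι ℂ u) := fun u v =>
    eq_neg_of_add_eq_zero_left (ExteriorAlgebra.ι_add_mul_swap u v)
  have key : ∀ v w : Fin n → ℂ, ι ℂ v * ι ℂ w ∈ Subring.center (SuperAlg n) := by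
    intro v w
    rw [Subring.mem_center_iff]
    intro g
    induction g using ExteriorAlgebra.induction with
    | algebraMap r => exact Algebra.commutes _ _
    | ι u =>
      rw [← mul_assoc, anti u v, neg_mul, mul_assoc, anti u w, mul_neg, neg_neg, mul_assoc]
    | mul a b ha hb => rw [mul_assoc, hb, ← mul_assoc, ha, mul_assoc]
    | add a b ha hb => rw [add_mul, mul_add, ha, hb]
  unfold evenPart at hx
  induction x, hx using CliffordAlgebra.even_induction with
  | algebraMap r => exact Subring.mem_center_iff.2 fun g => (Algebra.commutes _ _).symm
  | add x y hx hy ihx ihy => exact Subring.add_mem _ ihx ihy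
  | ι_mul_ι_mul v w x hx ih => exact Subring.mul_mem _ (key v w) ih

lemma schur_upd {R : Type*} [Ring R] {k l : ℕ} (X : Matrix (Fin k) (Fin k) R)
    (a : Matrix (Fin k) (Fin l) R) (B : Matrix (Fin l) (Fin k) R) (i : Fin k)
    (x : Fin k → R) (y : Fin l → R) :
    X.updateRow i x - a.updateRow i y * B = (X - a * B).updateRow i (x - Matrix.vecMul y B) := by
  ext p q
  by_cases h : p = i
  · subst h; simp [Matrix.mul_apply, Matrix.vecMul, dotProduct]
  · simp [Matrix.mul_apply, Matrix.updateRow_ne h]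

lemma ber_upd (n k l : ℕ) (A : Matrix (Fin (k + l)) (Fin (k + l)) (SuperAlg n)) (i : Fin k)
    (u : Fin (k + l) → SuperAlg n) :
    ber n k l (A.updateRow (Fin.castAdd l i) u) =
      ncdet ((Xblk n k l A - alphaBlk n k l A *
        (Ring.inverse (Yblk n k l A) * betaBlk n k l A)).updateRow i
          ((fun j => u (Fin.castAdd l j)) - Matrix.vecMul (fun j => u (Fin.natAdd k j))
            (Ring.inverse (Yblk n k l A) * betaBlk n k l A))) *
      Ring.inverse (ncdet (Yblk n k l A)) := by
  have hne : ∀ p : Fin l, Fin.natAdd k p ≠ Fin.castAdd l i := fun p h => by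
    have := congrArg Fin.val h; simp at this; omega
  have hX : Xblk n k l (A.updateRow (Fin.castAdd l i) u) =
      (Xblk n k l A).updateRow i (fun j => u (Fin.castAdd l j)) := by
    ext p q
    simp only [Xblk, Matrix.updateRow_apply, (Fin.castAdd_injective k l).eq_iff]
  have ha : alphaBlk n k l (A.updateRow (Fin.castAdd l i) u) =
      (alphaBlk n k l A).updateRow i (fun j => u (Fin.natAdd k j)) := by
    ext p q
    simp only [alphaBlk, Matrix.updateRow_apply, (Fin.castAdd_injective k l).eq_iff]
  have hY : Yblk n k l (A.updateRow (Fin.castAdd l i) u) = Yblk n k l A := by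
    ext p q
    simp only [Yblk, Matrix.updateRow_ne (hne p)]
  have hb : betaBlk n k l (A.updateRow (Fin.castAdd l i) u) = betaBlk n k l A := by
    ext p q
    simp only [betaBlk, Matrix.updateRow_ne (hne p)]
  rw [ber, hX, ha, hY, hb, Matrix.mul_assoc, schur_upd]

lemma berStar_upd (n k l : ℕ) (A : Matrix (Fin (k + l)) (Fin (k + l)) (SuperAlg n)) (i : Fin l)
    (u : Fin (k + l) → SuperAlg n) :
    berStar n k l (A.updateRow (Fin.natAdd k i) u) =
      Ring.inverse (ncdet (Xblk n k l A)) *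
      ncdet ((Yblk n k l A - betaBlk n k l A *
        (Ring.inverse (Xblk n k l A) * alphaBlk n k l A)).updateRow i
          ((fun j => u (Fin.natAdd k j)) - Matrix.vecMul (fun j => u (Fin.castAdd l j))
            (Ring.inverse (Xblk n k l A) * alphaBlk n k l A))) := by
  have hne : ∀ p : Fin k, Fin.castAdd l p ≠ Fin.natAdd k i := fun p h => by
    have := congrArg Fin.val h; simp at this; omega
  have hX : Yblk n k l (A.updateRow (Fin.natAdd k i) u) =
      (Yblk n k l A).updateRow i (fun j => u (Fin.natAdd k j)) := by
    ext p q
    simp only [Yblk, Matrix.updateRow_apply, (Fin.natAdd_injective l k).eq_iff]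
  have ha : betaBlk n k l (A.updateRow (Fin.natAdd k i) u) =
      (betaBlk n k l A).updateRow i (fun j => u (Fin.castAdd l j)) := by
    ext p q
    simp only [betaBlk, Matrix.updateRow_apply, (Fin.natAdd_injective l k).eq_iff]
  have hY : Xblk n k l (A.updateRow (Fin.natAdd k i) u) = Xblk n k l A := by
    ext p q
    simp only [Xblk, Matrix.updateRow_ne (hne p)]
  have hb : alphaBlk n k l (A.updateRow (Fin.natAdd k i) u) = alphaBlk n k l A := by
    ext p q
    simp only [alphaBlk, Matrix.updateRow_ne (hne p)]
  rw [berStar, hX, ha, hY, hb, Matrix.mul_assoc, schur_upd]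

lemma row_add {R : Type*} [Ring R] {k l : ℕ} (x x' : Fin k → R) (y y' : Fin l → R)
    (B : Matrix (Fin l) (Fin k) R) :
    (x + x') - Matrix.vecMul (y + y') B = (x - Matrix.vecMul y B) + (x' - Matrix.vecMul y' B) := by
  rw [Matrix.add_vecMul]; abel

lemma row_mul {R : Type*} [Ring R] {k l : ℕ} (c : R) (x : Fin k → R) (y : Fin l → R)
    (B : Matrix (Fin l) (Fin k) R) :
    ((fun j => c * x j) - Matrix.vecMul (fun j => c * y j) B : Fin k → R) =
      fun j => c * (x - Matrix.vecMul y B) j := by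
  funext j
  simp [Matrix.vecMul, dotProduct, mul_sub, Finset.mul_sum, mul_assoc]

/-- Let `A` be an even `(k|l)`-supermatrix over `Λ`.  If the odd-odd block
`Y` is invertible and `i` is an even row index, then `u ↦ ber(A_{i←u})`, on row vectors `u`
with first `k` entries even and last `l` entries odd, is additive and `Λ₀`-homogeneous.
Likewise, if the even-even block `X` is invertible and `i` is an odd row index, then
`u ↦ ber*(A_{i←u})`, on row vectors `u` with first `k` entries odd and last `l` entries even,
is additive and `Λ₀`-homogeneous. -/
theorem statement13 (n k l : ℕ) (A : Matrix (Fin (k + l)) (Fin (k + l)) (SuperAlg n))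
    (hA : IsEvenSupermatrix n k l A) :
    (IsUnit (Yblk n k l A) →
      ∀ i : Fin k,
        (∀ u v : Fin (k + l) → SuperAlg n, EvenRowVec n k l u → EvenRowVec n k l v →
          ber n k l (A.updateRow (Fin.castAdd l i) (u + v)) =
            ber n k l (A.updateRow (Fin.castAdd l i) u) +
              ber n k l (A.updateRow (Fin.castAdd l i) v)) ∧
        (∀ (u : Fin (k + l) → SuperAlg n) (lam : SuperAlg n), EvenRowVec n k l u →
          lam ∈ evenPart n →
          ber n k l (A.updateRow (Fin.castAdd l i) fun j => lam * u j) =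
            lam * ber n k l (A.updateRow (Fin.castAdd l i) u))) ∧
    (IsUnit (Xblk n k l A) →
      ∀ i : Fin l,
        (∀ u v : Fin (k + l) → SuperAlg n, OddRowVec n k l u → OddRowVec n k l v →
          berStar n k l (A.updateRow (Fin.natAdd k i) (u + v)) =
            berStar n k l (A.updateRow (Fin.natAdd k i) u) +
              berStar n k l (A.updateRow (Fin.natAdd k i) v)) ∧
        (∀ (u : Fin (k + l) → SuperAlg n) (lam : SuperAlg n), OddRowVec n k l u →
          lam ∈ evenPart n →
          berStar n k l (A.updateRow (Fin.natAdd k i) fun j => lam * u j) =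
            lam * berStar n k l (A.updateRow (Fin.natAdd k i) u))) := by
  refine ⟨fun _ i => ⟨fun u v _ _ => ?_, fun u lam _ hl => ?_⟩,
    fun _ i => ⟨fun u v _ _ => ?_, fun u lam _ hl => ?_⟩⟩
  · rw [ber_upd, ber_upd, ber_upd, ← add_mul, ← ncdet_updateRow_add, ← row_add]
    rfl
  · rw [ber_upd, ber_upd, ← mul_assoc, ← ncdet_updateRow_mul _ _ _ _ (evenPart_central n lam hl),
      ← row_mul]
  · rw [berStar_upd, berStar_upd, berStar_upd, ← mul_add, ← ncdet_updateRow_add, ← row_add]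
    rfl
  · rw [berStar_upd, berStar_upd, ← mul_assoc,
      ← Subring.mem_center_iff.1 (evenPart_central n lam hl), mul_assoc,
      ← ncdet_updateRow_mul _ _ _ _ (evenPart_central n lam hl), ← row_mul]

end
end

section
/- Let A be an even (k|l)-supermatrix over Λ, let m ≠ r be row indices, and let λ ∈ Λ₀ if rows m and r have the same parity and λ ∈ Λ₁ if they have opposite parity. Let B be the matrix obtained from A by replacing row m with (row m) + λ·(row r). Then B is again an even (k|l)-supermatrix; if the odd-odd blocks of both A and B are invertible then ber(B) = ber(A), and if the even-even blocks of both A and B are invertible then ber*(B) = ber*(A). -/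
noncomputable section

open ExteriorAlgebra

/-- All entries are central. -/
def IsC {R : Type*} [Ring R] {m n : Type*} (M : Matrix m n R) : Prop :=
  ∀ i j, M i j ∈ Subring.center R

section generic
variable {R : Type*} [Ring R]

theorem IsC.lift {m n : Type*} {M : Matrix m n R} (h : IsC M) :
    ∃ N : Matrix m n (Subring.center R), M = N.map (Subring.center R).subtype :=
  ⟨fun i j => ⟨M i j, h i j⟩, by ext; rfl⟩

theorem isC_map {m n : Type*} (N : Matrix m n (Subring.center R)) :
    IsC (N.map (Subring.center R).subtype) := fun i j => (N i j).2

theorem ncdet_map {k : ℕ} (N : Matrix (Fin k) (Fin k) (Subring.center R)) :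
    ncdet (N.map (Subring.center R).subtype) = (Subring.center R).subtype N.det := by
  rw [ncdet, Matrix.det_apply, map_sum]
  refine Finset.sum_congr rfl fun σ _ => ?_
  rw [← List.prod_ofFn, Units.smul_def, map_zsmul, map_list_prod, List.map_ofFn]
  rfl

theorem ncdet_mul {k : ℕ} {M N : Matrix (Fin k) (Fin k) R} (hM : IsC M) (hN : IsC N) :
    ncdet (M * N) = ncdet M * ncdet N := by
  obtain ⟨M, rfl⟩ := hM.lift
  obtain ⟨N, rfl⟩ := hN.lift
  rw [← Matrix.map_mul, ncdet_map, ncdet_map, ncdet_map, Matrix.det_mul, map_mul]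

theorem ncdet_mem {k : ℕ} {M : Matrix (Fin k) (Fin k) R} (hM : IsC M) :
    ncdet M ∈ Subring.center R := by
  obtain ⟨M, rfl⟩ := hM.lift
  rw [ncdet_map]; exact M.det.2

theorem isC_one {k : ℕ} : IsC (1 : Matrix (Fin k) (Fin k) R) := by
  intro i j
  rw [Matrix.one_apply]; split_ifs
  · exact one_mem _
  · exact zero_mem _

theorem isC_single {m n : Type*} [DecidableEq m] [DecidableEq n] (i : m) (j : n) {c : R}
    (hc : c ∈ Subring.center R) : IsC (Matrix.single i j c) := by
  intro a b
  rw [Matrix.single_apply]; split_ifs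
  · exact hc
  · exact zero_mem _

theorem IsC.add {m n : Type*} {M N : Matrix m n R} (hM : IsC M) (hN : IsC N) : IsC (M + N) :=
  fun i j => add_mem (hM i j) (hN i j)

theorem IsC.sub {m n : Type*} {M N : Matrix m n R} (hM : IsC M) (hN : IsC N) : IsC (M - N) :=
  fun i j => sub_mem (hM i j) (hN i j)

theorem ncdet_one {k : ℕ} : ncdet (1 : Matrix (Fin k) (Fin k) R) = 1 := by
  have := ncdet_map (R := R) (1 : Matrix (Fin k) (Fin k) _)
  rw [Matrix.map_one _ (map_zero _) (map_one _)] at this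
  rw [this, Matrix.det_one, map_one]

theorem ncdet_one_add_single {k : ℕ} {p r : Fin k} (h : p ≠ r) {c : R}
    (hc : c ∈ Subring.center R) : ncdet (1 + Matrix.single p r c) = 1 := by
  have := ncdet_map (R := R) (Matrix.transvection p r ⟨c, hc⟩)
  rw [Matrix.det_transvection_of_ne _ _ h, map_one, Matrix.transvection,
    Matrix.map_add _ (map_add _), Matrix.map_one _ (map_zero _) (map_one _),
    Matrix.map_single] at this
  exact this

theorem ncdet_one_sub_vecMulVec {k : ℕ} {u v : Fin k → R}
    (hu : ∀ i, u i ∈ Subring.center R) (hv : ∀ i, v i ∈ Subring.center R) :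
    ncdet (1 - Matrix.vecMulVec u v) = 1 - v ⬝ᵥ u := by
  let u' : Fin k → Subring.center R := fun i => ⟨u i, hu i⟩
  let v' : Fin k → Subring.center R := fun i => ⟨v i, hv i⟩
  have h := ncdet_map (R := R) (1 - Matrix.replicateCol Unit u' * Matrix.replicateRow Unit v')
  rw [Matrix.det_one_sub_mul_comm] at h
  have e : (1 - Matrix.replicateCol Unit u' * Matrix.replicateRow Unit v').map
      (Subring.center R).subtype = 1 - Matrix.vecMulVec u v := by
    rw [Matrix.map_sub _ (map_sub _), Matrix.map_one _ (map_zero _) (map_one _)]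
    congr 1
    ext i j
    simp [Matrix.mul_apply, Matrix.vecMulVec_apply, u', v']
  rw [e] at h
  rw [h]
  simp [Matrix.det_unique, Matrix.mul_apply, dotProduct, u', v']

theorem isC_inverse {k : ℕ} {M : Matrix (Fin k) (Fin k) R} (hM : IsC M) :
    IsC (Ring.inverse M) := by
  by_cases hu : IsUnit M
  swap
  · rw [Ring.inverse_non_unit _ hu]; exact fun i j => zero_mem _
  intro i j
  rw [Subring.mem_center_iff]
  intro c
  let D : Matrix (Fin k) (Fin k) R := Matrix.diagonal fun _ => c
  have h1 : D * M = M * D := by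
    ext a b
    simp only [D, Matrix.diagonal_mul, Matrix.mul_diagonal]
    exact Subring.mem_center_iff.1 (hM a b) c
  have h2 : D * Ring.inverse M = Ring.inverse M * D := by
    calc D * Ring.inverse M = Ring.inverse M * M * D * Ring.inverse M := by
          rw [Ring.inverse_mul_cancel _ hu, one_mul]
      _ = Ring.inverse M * D * (M * Ring.inverse M) := by
          simp only [mul_assoc]; rw [← mul_assoc M D, ← h1, mul_assoc]
      _ = _ := by rw [Ring.mul_inverse_cancel _ hu, mul_one]
  have := congrFun (congrFun h2 i) j
  simpa only [D, Matrix.diagonal_mul, Matrix.mul_diagonal] using this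

theorem isUnit_ncdet {k : ℕ} {M : Matrix (Fin k) (Fin k) R} (hM : IsC M) (hu : IsUnit M) :
    IsUnit (ncdet M) := by
  refine ⟨⟨ncdet M, ncdet (Ring.inverse M), ?_, ?_⟩, rfl⟩
  · rw [← ncdet_mul hM (isC_inverse hM), Ring.mul_inverse_cancel _ hu, ncdet_one]
  · rw [← ncdet_mul (isC_inverse hM) hM, Ring.inverse_mul_cancel _ hu, ncdet_one]

/-- The generic Berezinian expression. -/
def gber {k l : ℕ} (X : Matrix (Fin k) (Fin k) R) (α : Matrix (Fin k) (Fin l) R)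
    (β : Matrix (Fin l) (Fin k) R) (Y : Matrix (Fin l) (Fin l) R) : R :=
  ncdet (X - α * Ring.inverse Y * β) * Ring.inverse (ncdet Y)

/-- product of odd, central, odd -/
theorem mid_mem {x y z : R} (hz : z ∈ Subring.center R) (hxy : x * y ∈ Subring.center R) :
    x * z * y ∈ Subring.center R := by
  have : x * z * y = x * y * z := by
    rw [mul_assoc, mul_assoc, Subring.mem_center_iff.1 hz y]
  rw [this]; exact mul_mem hxy hz

theorem isC_schur {k l : ℕ} {X : Matrix (Fin k) (Fin k) R} {α : Matrix (Fin k) (Fin l) R}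
    {β : Matrix (Fin l) (Fin k) R} {Y : Matrix (Fin l) (Fin l) R}
    (hX : IsC X) (hY : IsC Y) (hαβ : ∀ i j i' j', α i j * β i' j' ∈ Subring.center R) :
    IsC (X - α * Ring.inverse Y * β) := by
  refine hX.sub fun i j => ?_
  rw [Matrix.mul_apply]
  refine sum_mem fun b _ => ?_
  rw [Matrix.mul_apply, Finset.sum_mul]
  exact sum_mem fun a _ => mid_mem (isC_inverse hY _ _) (hαβ _ _ _ _)

theorem gber_ee {k l : ℕ} {X : Matrix (Fin k) (Fin k) R} {α : Matrix (Fin k) (Fin l) R}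
    {β : Matrix (Fin l) (Fin k) R} {Y : Matrix (Fin l) (Fin l) R}
    (hX : IsC X) (hY : IsC Y) (hαβ : ∀ i j i' j', α i j * β i' j' ∈ Subring.center R)
    {p r : Fin k} (h : p ≠ r) {c : R} (hc : c ∈ Subring.center R) :
    gber (X + Matrix.single p r c * X) (α + Matrix.single p r c * α) β Y = gber X α β Y := by
  have e : X + Matrix.single p r c * X - (α + Matrix.single p r c * α) * Ring.inverse Y * β
      = (1 + Matrix.single p r c) * (X - α * Ring.inverse Y * β) := by
    simp only [Matrix.add_mul, Matrix.mul_sub, Matrix.one_mul, Matrix.mul_assoc]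
  rw [gber, gber, e, ncdet_mul (isC_one.add (isC_single _ _ hc)) (isC_schur hX hY hαβ),
    ncdet_one_add_single h hc, one_mul]

theorem gber_oo {k l : ℕ} {X : Matrix (Fin k) (Fin k) R} {α : Matrix (Fin k) (Fin l) R}
    {β : Matrix (Fin l) (Fin k) R} {Y : Matrix (Fin l) (Fin l) R}
    (hY : IsC Y) (hu : IsUnit Y)
    {p r : Fin l} (h : p ≠ r) {c : R} (hc : c ∈ Subring.center R)
    (hu' : IsUnit (Y + Matrix.single p r c * Y)) :
    gber X α (β + Matrix.single p r c * β) (Y + Matrix.single p r c * Y) = gber X α β Y := by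
  have e1 : ∀ {m : ℕ} (Z : Matrix (Fin l) (Fin m) R),
      Z + Matrix.single p r c * Z = (1 + Matrix.single p r c) * Z := by
    intro m Z; rw [Matrix.add_mul, Matrix.one_mul]
  rw [e1] at hu'
  rw [e1, e1]
  have e2 : Ring.inverse ((1 + Matrix.single p r c) * Y) * ((1 + Matrix.single p r c) * β)
      = Ring.inverse Y * β := by
    have : (1 + Matrix.single p r c) * β
        = ((1 + Matrix.single p r c) * Y) * (Ring.inverse Y * β) := by
      rw [Matrix.mul_assoc, ← Matrix.mul_assoc Y, Ring.mul_inverse_cancel _ hu, Matrix.one_mul]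
    rw [this, ← Matrix.mul_assoc, Ring.inverse_mul_cancel _ hu', Matrix.one_mul]
  rw [gber, gber, Matrix.mul_assoc, e2, ncdet_mul (isC_one.add (isC_single _ _ hc)) hY,
    ncdet_one_add_single h hc, one_mul, Matrix.mul_assoc]

theorem gber_eo {k l : ℕ} {X : Matrix (Fin k) (Fin k) R} {α : Matrix (Fin k) (Fin l) R}
    {β : Matrix (Fin l) (Fin k) R} {Y : Matrix (Fin l) (Fin l) R} (hu : IsUnit Y)
    (E : Matrix (Fin k) (Fin l) R) :
    gber (X + E * β) (α + E * Y) β Y = gber X α β Y := by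
  have e : X + E * β - (α + E * Y) * Ring.inverse Y * β = X - α * Ring.inverse Y * β := by
    rw [Matrix.add_mul, Matrix.mul_assoc E Y, Ring.mul_inverse_cancel _ hu, Matrix.mul_one,
      Matrix.add_mul]
    abel
  rw [gber, gber, e]

theorem gber_oe {k l : ℕ} {X : Matrix (Fin k) (Fin k) R} {α : Matrix (Fin k) (Fin l) R}
    {β : Matrix (Fin l) (Fin k) R} {Y : Matrix (Fin l) (Fin l) R}
    (hX : IsC X) (hY : IsC Y) (hαβ : ∀ i j i' j', α i j * β i' j' ∈ Subring.center R)
    (hu : IsUnit Y) {p : Fin l} {r : Fin k} {c : R}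
    (hc : ∀ i j, α i j * c ∈ Subring.center R) (hac : ∀ i j, α i j * c = -(c * α i j))
    (hcc : c * c = 0)
    (hu' : IsUnit (Y + Matrix.single p r c * α)) :
    gber X α (β + Matrix.single p r c * X) (Y + Matrix.single p r c * α) = gber X α β Y := by
  set E : Matrix (Fin l) (Fin k) R := Matrix.single p r c with hE
  set W := Y + E * α with hW
  have hc' : ∀ i j, c * α i j ∈ Subring.center R := fun i j => by
    have := neg_mem (hc i j)
    rwa [hac, neg_neg] at this
  have hWC : IsC W := by
    refine hY.add fun i j => ?_
    rw [Matrix.mul_apply]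
    refine sum_mem fun a _ => ?_
    rw [hE, Matrix.single_apply]; split_ifs
    · exact hc' _ _
    · rw [zero_mul]; exact zero_mem _
  have hVC := isC_inverse hWC
  set V := Ring.inverse W with hV
  have hWV : W * V = 1 := Ring.mul_inverse_cancel _ hu'
  have hVW : V * W = 1 := Ring.inverse_mul_cancel _ hu'
  set a := (α * V) r p with ha
  have hav : ∀ i j, (α * V) i j * c = -(c * (α * V) i j) := by
    intro i j
    rw [Matrix.mul_apply, Finset.sum_mul, Finset.mul_sum, ← Finset.sum_neg_distrib]
    refine Finset.sum_congr rfl fun b _ => ?_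
    rw [mul_assoc, ← Subring.mem_center_iff.1 (hVC b j) c, ← mul_assoc, hac, neg_mul, mul_assoc]
  have hcv : ∀ i j, (α * V) i j * c ∈ Subring.center R := by
    intro i j
    rw [Matrix.mul_apply, Finset.sum_mul]
    exact sum_mem fun b _ => mid_mem (hVC _ _) (hc _ _)
  have hcv' : ∀ i j, c * (α * V) i j ∈ Subring.center R := fun i j => by
    have := neg_mem (hcv i j)
    rwa [hav, neg_neg] at this
  have hs : ∀ {m : ℕ} (q i : Fin m), (Pi.single q 1 : Fin m → R) i ∈ Subring.center R := by
    intro m q i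
    rw [Pi.single_apply]; split_ifs
    · exact one_mem _
    · exact zero_mem _
  have f1 : α * V * E = Matrix.vecMulVec (fun i => (α * V) i p * c) (Pi.single r 1) := by
    ext i j
    rw [Matrix.vecMulVec_apply, hE]
    by_cases hj : j = r
    · subst hj; simp
    · rw [Matrix.mul_single_apply_of_ne _ _ _ _ _ hj]; simp [hj]
  have f2 : E * (α * V) = Matrix.vecMulVec (Pi.single p 1) (fun j => c * (α * V) r j) := by
    ext i j
    rw [Matrix.vecMulVec_apply, hE]
    by_cases hi : i = p
    · subst hi; simp
    · rw [Matrix.single_mul_apply_of_ne _ _ _ _ _ hi]; simp [hi]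
  have d1 : ncdet (1 - α * V * E) = 1 - a * c := by
    rw [f1, ncdet_one_sub_vecMulVec (fun i => hcv _ _) (hs r)]; simp [ha]
  have d2 : ncdet (1 - E * (α * V)) = 1 + a * c := by
    rw [f2, ncdet_one_sub_vecMulVec (hs p) (fun i => hcv' _ _)]
    simp only [dotProduct_single, mul_one]
    rw [ha, hav]; abel
  have c1 : IsC (1 - α * V * E) := by
    refine isC_one.sub ?_
    rw [f1]; exact fun i j => mul_mem (hcv _ _) (hs _ _)
  have c2 : IsC (1 - E * (α * V)) := by
    refine isC_one.sub ?_
    rw [f2]; exact fun i j => mul_mem (hs _ _) (hcv' _ _)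
  have hd : (1 - a * c) * (1 + a * c) = 1 := by
    have : a * c * (a * c) = 0 := by
      have h1 : a * c = -(c * a) := hav _ _
      rw [← mul_assoc, mul_assoc a c a, ← neg_neg (c * a), ← h1, mul_neg, neg_mul,
        mul_assoc, mul_assoc, hcc, mul_zero, mul_zero, neg_zero]
    calc (1 - a * c) * (1 + a * c) = 1 - a * c * (a * c) := by noncomm_ring
      _ = 1 := by rw [this, sub_zero]
  have hYW : (1 - E * (α * V)) * W = Y := by
    rw [Matrix.sub_mul, Matrix.one_mul, Matrix.mul_assoc, Matrix.mul_assoc, hVW, Matrix.mul_one, hW]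
    abel
  have hdY : ncdet Y = (1 + a * c) * ncdet W := by
    rw [← d2, ← ncdet_mul c2 hWC, hYW]
  have hY1 : Y * Ring.inverse Y = 1 := Ring.mul_inverse_cancel _ hu
  have hS : X - α * V * (β + E * X) = (1 - α * V * E) * (X - α * Ring.inverse Y * β) := by
    have g : (1 - α * V * E) * α = α * V * Y := by
      have : Y = W - E * α := by rw [hW]; abel
      rw [this, Matrix.mul_sub, Matrix.mul_assoc α V W, hVW, Matrix.sub_mul, Matrix.one_mul,
        Matrix.mul_one, Matrix.mul_assoc (α * V)]
    rw [Matrix.mul_sub, ← Matrix.mul_assoc, ← Matrix.mul_assoc, g, Matrix.mul_assoc (α * V) Y, hY1,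
      Matrix.mul_one, Matrix.sub_mul, Matrix.one_mul, Matrix.mul_add, Matrix.mul_assoc (α * V) E]
    abel
  rw [gber, gber, Ring.eq_mul_inverse_iff_mul_eq _ _ _ (isUnit_ncdet hY hu), ← hV, hS,
    ncdet_mul c1 (isC_schur hX hY hαβ), d1, hdY]
  have m2 : 1 + a * c ∈ Subring.center R := add_mem (one_mem _) (hcv _ _)
  rw [← Subring.mem_center_iff.1 m2, ← mul_assoc,
    Ring.inverse_mul_cancel_right _ _ (isUnit_ncdet hWC hu'),
    Subring.mem_center_iff.1 m2, ← mul_assoc]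
  rw [show (1 + a * c) * (1 - a * c) = 1 by
    rw [← Subring.mem_center_iff.1 m2, hd], one_mul]

end generic

section ext
variable {n : ℕ}

theorem anti_iota (u v : Fin n → ℂ) :
    CliffordAlgebra.ι (0 : QuadraticForm ℂ (Fin n → ℂ)) u * CliffordAlgebra.ι 0 v =
      -(CliffordAlgebra.ι 0 v * CliffordAlgebra.ι 0 u) := by
  rw [eq_neg_iff_add_eq_zero, CliffordAlgebra.ι_mul_ι_add_swap]
  simp [QuadraticMap.polar]

theorem even_iota {x : SuperAlg n} (hx : x ∈ evenPart n) (v : Fin n → ℂ) :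
    x * CliffordAlgebra.ι 0 v = CliffordAlgebra.ι 0 v * x := by
  refine CliffordAlgebra.even_induction 0
    (motive := fun x _ => x * CliffordAlgebra.ι 0 v = CliffordAlgebra.ι 0 v * x) ?_ ?_ ?_ x hx
  · intro r; exact Algebra.commutes _ _
  · intro x y _ _ h1 h2; rw [add_mul, mul_add, h1, h2]
  · intro a b x _ h
    rw [mul_assoc, h, ← mul_assoc, mul_assoc _ (CliffordAlgebra.ι 0 b), anti_iota b v, mul_neg,
      ← mul_assoc, anti_iota a v]
    simp only [neg_mul, neg_neg, mul_assoc]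

theorem even_center {x : SuperAlg n} (hx : x ∈ evenPart n) : x ∈ Subring.center (SuperAlg n) := by
  rw [Subring.mem_center_iff]
  intro y
  induction y using CliffordAlgebra.induction with
  | algebraMap r => exact Algebra.commutes _ _
  | ι v => exact (even_iota hx v).symm
  | mul a b ha hb => rw [mul_assoc, hb, ← mul_assoc, ha, mul_assoc]
  | add a b ha hb => rw [add_mul, mul_add, ha, hb]

theorem mul_mem_eo {i j t : ZMod 2} (h : i + j = t) {x y : SuperAlg n}
    (hx : x ∈ CliffordAlgebra.evenOdd (0 : QuadraticForm ℂ (Fin n → ℂ)) i)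
    (hy : y ∈ CliffordAlgebra.evenOdd (0 : QuadraticForm ℂ (Fin n → ℂ)) j) :
    x * y ∈ CliffordAlgebra.evenOdd (0 : QuadraticForm ℂ (Fin n → ℂ)) t := by
  subst h
  exact Submodule.mul_le.mp (CliffordAlgebra.evenOdd_mul_le _ i j) _ hx _ hy

theorem even_mul_even {x y : SuperAlg n} (hx : x ∈ evenPart n) (hy : y ∈ evenPart n) :
    x * y ∈ evenPart n := by
  unfold evenPart at *
  exact mul_mem_eo (by decide) hx hy

theorem even_mul_odd {x y : SuperAlg n} (hx : x ∈ evenPart n) (hy : y ∈ oddPart n) :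
    x * y ∈ oddPart n := by
  unfold evenPart oddPart at *
  exact mul_mem_eo (by decide) hx hy

theorem odd_mul_even {x y : SuperAlg n} (hx : x ∈ oddPart n) (hy : y ∈ evenPart n) :
    x * y ∈ oddPart n := by
  unfold evenPart oddPart at *
  exact mul_mem_eo (by decide) hx hy

theorem odd_mul_odd {x y : SuperAlg n} (hx : x ∈ oddPart n) (hy : y ∈ oddPart n) :
    x * y ∈ evenPart n := by
  unfold evenPart oddPart at *
  exact mul_mem_eo (by decide) hx hy

theorem odd_anti_iota {x : SuperAlg n} (hx : x ∈ oddPart n) (v : Fin n → ℂ) :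
    x * CliffordAlgebra.ι 0 v = -(CliffordAlgebra.ι 0 v * x) := by
  refine CliffordAlgebra.odd_induction 0
    (P := fun x _ => x * CliffordAlgebra.ι 0 v = -(CliffordAlgebra.ι 0 v * x)) ?_ ?_ ?_ x hx
  · intro r; exact anti_iota _ _
  · intro x y _ _ h1 h2; rw [add_mul, mul_add, h1, h2, neg_add]
  · intro a b x _ h
    have := even_iota (n := n) (x := CliffordAlgebra.ι 0 a * CliffordAlgebra.ι 0 b)
      (CliffordAlgebra.ι_mul_ι_mem_evenOdd_zero _ a b) v
    rw [mul_assoc, h, mul_neg, ← mul_assoc, this, mul_assoc]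

theorem odd_anti {x y : SuperAlg n} (hx : x ∈ oddPart n) (hy : y ∈ oddPart n) :
    x * y = -(y * x) := by
  refine CliffordAlgebra.odd_induction 0
    (P := fun y _ => x * y = -(y * x)) ?_ ?_ ?_ y hy
  · intro r; exact odd_anti_iota hx _
  · intro a b _ _ h1 h2; rw [add_mul, mul_add, h1, h2, neg_add]
  · intro a b y _ h
    have := Subring.mem_center_iff.1 (even_center (n := n)
      (x := CliffordAlgebra.ι 0 a * CliffordAlgebra.ι 0 b)
      (CliffordAlgebra.ι_mul_ι_mem_evenOdd_zero _ a b)) x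
    rw [← mul_assoc, this, mul_assoc, h, mul_neg, mul_assoc _ y x]

theorem odd_sq {x : SuperAlg n} (hx : x ∈ oddPart n) : x * x = 0 := by
  have h := odd_anti hx hx
  have h2 : (2 : ℂ) • (x * x) = 0 := by
    rw [two_smul]; nth_rewrite 1 [h]; exact neg_add_cancel _
  exact (smul_eq_zero.1 h2).resolve_left two_ne_zero

theorem ber_eq {k l : ℕ} (A : Matrix (Fin (k + l)) (Fin (k + l)) (SuperAlg n)) :
    ber n k l A = gber (Xblk n k l A) (alphaBlk n k l A) (betaBlk n k l A) (Yblk n k l A) := rfl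

theorem berStar_eq {k l : ℕ} {A : Matrix (Fin (k + l)) (Fin (k + l)) (SuperAlg n)}
    (hA : IsEvenSupermatrix n k l A) :
    berStar n k l A =
      gber (Yblk n k l A) (betaBlk n k l A) (alphaBlk n k l A) (Xblk n k l A) := by
  obtain ⟨h1, h2, h3, h4⟩ := hA
  have := ncdet_mem (isC_schur (X := Yblk n k l A) (α := betaBlk n k l A) (β := alphaBlk n k l A)
    (Y := Xblk n k l A) (fun i j => even_center (h2 i j)) (fun i j => even_center (h1 i j))
    (fun i j i' j' => even_center (odd_mul_odd (h4 i j) (h3 i' j'))))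
  rw [gber, berStar, Subring.mem_center_iff.1 this]

theorem isEven_update {k l : ℕ} {A : Matrix (Fin (k + l)) (Fin (k + l)) (SuperAlg n)}
    (hA : IsEvenSupermatrix n k l A) (p r : Fin (k + l)) (lam : SuperAlg n)
    (hlam₀ : ((((p : ℕ) < k) ↔ ((r : ℕ) < k)) → lam ∈ evenPart n))
    (hlam₁ : (¬ (((p : ℕ) < k) ↔ ((r : ℕ) < k)) → lam ∈ oddPart n)) :
    IsEvenSupermatrix n k l (A.updateRow p fun j => A p j + lam * A r j) := by
  obtain ⟨h1, h2, h3, h4⟩ := hA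
  simp only [Xblk, Yblk, alphaBlk, betaBlk] at h1 h2 h3 h4
  refine ⟨fun i j => ?_, fun i j => ?_, fun i j => ?_, fun i j => ?_⟩ <;>
    simp only [Xblk, Yblk, alphaBlk, betaBlk, Matrix.updateRow_apply] <;> split_ifs with h
  all_goals first | exact h1 _ _ | exact h2 _ _ | exact h3 _ _ | exact h4 _ _ | skip
  all_goals
    subst h
    refine add_mem (by first | exact h1 _ _ | exact h2 _ _ | exact h3 _ _ | exact h4 _ _) ?_
    induction r using Fin.addCases with
    | left r =>
      simp at hlam₀ hlam₁
      first
        | exact even_mul_even hlam₀ (h1 _ _)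
        | exact even_mul_odd hlam₀ (h3 _ _)
        | exact odd_mul_even hlam₁ (h1 _ _)
        | exact odd_mul_odd hlam₁ (h3 _ _)
    | right r =>
      simp at hlam₀ hlam₁
      first
        | exact even_mul_even hlam₀ (h2 _ _)
        | exact even_mul_odd hlam₀ (h4 _ _)
        | exact odd_mul_even hlam₁ (h2 _ _)
        | exact odd_mul_odd hlam₁ (h4 _ _)

theorem add_single_mul_apply {k m l : ℕ} (p : Fin k) (r : Fin m) (c : SuperAlg n)
    (Z : Matrix (Fin k) (Fin l) (SuperAlg n)) (Z' : Matrix (Fin m) (Fin l) (SuperAlg n)) (i j) :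
    (Z + Matrix.single p r c * Z') i j = if i = p then Z p j + c * Z' r j else Z i j := by
  rw [Matrix.add_apply]
  split_ifs with h
  · subst h; simp
  · rw [Matrix.single_mul_apply_of_ne _ _ _ _ _ h, add_zero]

end ext

/-- Let `A` be an even `(k|l)`-supermatrix over `Λ`, let `p ≠ r` be row
indices, and let `λ ∈ Λ₀` if rows `p` and `r` have the same parity, `λ ∈ Λ₁` if they have
opposite parity.  Let `B` be obtained from `A` by replacing row `p` with (row `p`) + `λ`·(row
`r`).  Then `B` is again an even `(k|l)`-supermatrix; if the odd-odd blocks of both `A` and `B`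
are invertible then `ber(B) = ber(A)`, and if the even-even blocks of both `A` and `B` are
invertible then `ber*(B) = ber*(A)`. -/
theorem statement14 (n k l : ℕ) (A : Matrix (Fin (k + l)) (Fin (k + l)) (SuperAlg n))
    (hA : IsEvenSupermatrix n k l A) (p r : Fin (k + l)) (hpr : p ≠ r) (lam : SuperAlg n)
    (hlam₀ : ((((p : ℕ) < k) ↔ ((r : ℕ) < k)) → lam ∈ evenPart n))
    (hlam₁ : (¬ (((p : ℕ) < k) ↔ ((r : ℕ) < k)) → lam ∈ oddPart n)) :
    IsEvenSupermatrix n k l (A.updateRow p fun j => A p j + lam * A r j) ∧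
    (IsUnit (Yblk n k l A) →
      IsUnit (Yblk n k l (A.updateRow p fun j => A p j + lam * A r j)) →
      ber n k l (A.updateRow p fun j => A p j + lam * A r j) = ber n k l A) ∧
    (IsUnit (Xblk n k l A) →
      IsUnit (Xblk n k l (A.updateRow p fun j => A p j + lam * A r j)) →
      berStar n k l (A.updateRow p fun j => A p j + lam * A r j) = berStar n k l A) := by
  have hB := isEven_update hA p r lam hlam₀ hlam₁
  refine ⟨hB, ?_⟩
  rw [berStar_eq hA, berStar_eq hB, ber_eq, ber_eq]
  clear hB
  obtain ⟨h1, h2, h3, h4⟩ := hA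
  have hX : IsC (Xblk n k l A) := fun i j => even_center (h1 i j)
  have hY : IsC (Yblk n k l A) := fun i j => even_center (h2 i j)
  have hab : ∀ i j i' j', alphaBlk n k l A i j * betaBlk n k l A i' j' ∈
    Subring.center (SuperAlg n) := fun i j i' j' => even_center (odd_mul_odd (h3 i j) (h4 i' j'))
  have hba : ∀ i j i' j', betaBlk n k l A i j * alphaBlk n k l A i' j' ∈
    Subring.center (SuperAlg n) := fun i j i' j' => even_center (odd_mul_odd (h4 i j) (h3 i' j'))
  have ne1 : ∀ (a : Fin k) (b : Fin l), Fin.castAdd l a ≠ Fin.natAdd k b := by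
    intro a b h
    have := congrArg Fin.val h
    simp at this; omega
  induction p using Fin.addCases with
  | left p =>
    have bβ : ∀ f, betaBlk n k l (A.updateRow (Fin.castAdd l p) f) = betaBlk n k l A := by
      intro f; ext i j
      simp [betaBlk, Matrix.updateRow_apply, (ne1 _ _).symm]
    have bY : ∀ f, Yblk n k l (A.updateRow (Fin.castAdd l p) f) = Yblk n k l A := by
      intro f; ext i j
      simp [Yblk, Matrix.updateRow_apply, (ne1 _ _).symm]
    rw [bβ, bY]
    induction r using Fin.addCases with
    | left r =>
      have hc : lam ∈ evenPart n := hlam₀ (by simp)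
      have hne : p ≠ r := fun h => hpr (by rw [h])
      have bX : Xblk n k l (A.updateRow (Fin.castAdd l p) fun j => A (Fin.castAdd l p) j +
          lam * A (Fin.castAdd l r) j) = Xblk n k l A + Matrix.single p r lam * Xblk n k l A := by
        ext i j
        rw [add_single_mul_apply]
        simp [Xblk, Matrix.updateRow_apply]
      have bα : alphaBlk n k l (A.updateRow (Fin.castAdd l p) fun j => A (Fin.castAdd l p) j +
          lam * A (Fin.castAdd l r) j) =
          alphaBlk n k l A + Matrix.single p r lam * alphaBlk n k l A := by
        ext i j
        rw [add_single_mul_apply]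
        simp [alphaBlk, Matrix.updateRow_apply]
      rw [bX, bα]
      exact ⟨fun _ _ => gber_ee hX hY hab hne (even_center hc),
        fun hu hu' => gber_oo hX hu hne (even_center hc) hu'⟩
    | right r =>
      have hc : lam ∈ oddPart n := hlam₁ (by simp)
      have bX : Xblk n k l (A.updateRow (Fin.castAdd l p) fun j => A (Fin.castAdd l p) j +
          lam * A (Fin.natAdd k r) j) = Xblk n k l A + Matrix.single p r lam * betaBlk n k l A := by
        ext i j
        rw [add_single_mul_apply]
        simp [Xblk, betaBlk, Matrix.updateRow_apply]
      have bα : alphaBlk n k l (A.updateRow (Fin.castAdd l p) fun j => A (Fin.castAdd l p) j +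
          lam * A (Fin.natAdd k r) j) =
          alphaBlk n k l A + Matrix.single p r lam * Yblk n k l A := by
        ext i j
        rw [add_single_mul_apply]
        simp [alphaBlk, Yblk, Matrix.updateRow_apply]
      rw [bX, bα]
      exact ⟨fun hu _ => gber_eo hu _,
        fun hu hu' => gber_oe hY hX hba hu (fun i j => even_center (odd_mul_odd (h4 i j) hc))
          (fun i j => odd_anti (h4 i j) hc) (odd_sq hc) hu'⟩
  | right p =>
    have bα : ∀ f, alphaBlk n k l (A.updateRow (Fin.natAdd k p) f) = alphaBlk n k l A := by
      intro f; ext i j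
      simp [alphaBlk, Matrix.updateRow_apply, ne1]
    have bX : ∀ f, Xblk n k l (A.updateRow (Fin.natAdd k p) f) = Xblk n k l A := by
      intro f; ext i j
      simp [Xblk, Matrix.updateRow_apply, ne1]
    rw [bα, bX]
    induction r using Fin.addCases with
    | left r =>
      have hc : lam ∈ oddPart n := hlam₁ (by simp)
      have bY : Yblk n k l (A.updateRow (Fin.natAdd k p) fun j => A (Fin.natAdd k p) j +
          lam * A (Fin.castAdd l r) j) =
          Yblk n k l A + Matrix.single p r lam * alphaBlk n k l A := by
        ext i j
        rw [add_single_mul_apply]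
        simp [Yblk, alphaBlk, Matrix.updateRow_apply]
      have bβ : betaBlk n k l (A.updateRow (Fin.natAdd k p) fun j => A (Fin.natAdd k p) j +
          lam * A (Fin.castAdd l r) j) =
          betaBlk n k l A + Matrix.single p r lam * Xblk n k l A := by
        ext i j
        rw [add_single_mul_apply]
        simp [betaBlk, Xblk, Matrix.updateRow_apply]
      rw [bY, bβ]
      exact ⟨fun hu hu' => gber_oe hX hY hab hu
          (fun i j => even_center (odd_mul_odd (h3 i j) hc))
          (fun i j => odd_anti (h3 i j) hc) (odd_sq hc) hu',
        fun hu _ => gber_eo hu _⟩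
    | right r =>
      have hc : lam ∈ evenPart n := hlam₀ (by simp)
      have hne : p ≠ r := fun h => hpr (by rw [h])
      have bY : Yblk n k l (A.updateRow (Fin.natAdd k p) fun j => A (Fin.natAdd k p) j +
          lam * A (Fin.natAdd k r) j) = Yblk n k l A + Matrix.single p r lam * Yblk n k l A := by
        ext i j
        rw [add_single_mul_apply]
        simp [Yblk, Matrix.updateRow_apply]
      have bβ : betaBlk n k l (A.updateRow (Fin.natAdd k p) fun j => A (Fin.natAdd k p) j +
          lam * A (Fin.natAdd k r) j) =
          betaBlk n k l A + Matrix.single p r lam * betaBlk n k l A := by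
        ext i j
        rw [add_single_mul_apply]
        simp [betaBlk, Matrix.updateRow_apply]
      rw [bY, bβ]
      exact ⟨fun hu hu' => gber_oo hY hu hne (even_center hc) hu',
        fun _ _ => gber_ee hY hX hba hne (even_center hc)⟩

end
end

section
/- If H : ℂᵍ → A is a super theta function for (Z_e, Z_o), then for each α ∈ {1,…,g−1} the function H_α := η_α·H + (1/(2πi))·Σ_{k=1}^{g} Z_{kα}·(∂H/∂z_k) is again a super theta function for (Z_e, Z_o); that is, H_α satisfies H_α(z + e_j) = H_α(z) for every standard basis vector e_j, and φ_i(H_α)(z + Z_i) = exp(−πi(2z_i + Z_{ii}))·H_α(z) for every i = 1,…,g and z ∈ ℂᵍ. -/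
noncomputable section

open ExteriorAlgebra

set_option synthInstance.maxHeartbeats 1000000 in
theorem superAlg_noZeroSMulDivisors (n : ℕ) : NoZeroSMulDivisors ℂ (SuperAlg n) :=
  inferInstance

theorem superAlg_exteriorPower_eq_bot (n i : ℕ) (hi : n < i) :
    (⋀[ℂ]^i (Fin n → ℂ) : Submodule ℂ (SuperAlg n)) = ⊥ := by
  rw [← ExteriorAlgebra.ιMulti_span_fixedDegree]
  refine le_bot_iff.mp (Submodule.span_le.mpr ?_)
  rintro x ⟨v, rfl⟩
  have hv : ¬ LinearIndependent ℂ v := by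
    intro h
    have hc := h.fintype_card_le_finrank
    simp only [Fintype.card_fin, Module.finrank_fin_fun] at hc
    omega
  haveI := superAlg_noZeroSMulDivisors n
  simpa using AlternatingMap.map_linearDependent (ιMulti ℂ i) v hv

/-- `Λ` is a finite-dimensional complex vector space (of dimension `2ⁿ`). -/
instance superAlg_moduleFinite (n : ℕ) : Module.Finite ℂ (SuperAlg n) := by
  classical
  rw [Module.finite_def]
  have hfg : ∀ i : ℕ, (⋀[ℂ]^i (Fin n → ℂ) : Submodule ℂ (SuperAlg n)).FG := by
    intro i
    refine Submodule.FG.pow ?_ i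
    rw [LinearMap.range_eq_map]
    exact Submodule.FG.map _ (Module.finite_def.mp inferInstance)
  have hint : DirectSum.IsInternal
      (fun i : ℕ => (⋀[ℂ]^i (Fin n → ℂ) : Submodule ℂ (SuperAlg n))) :=
    DirectSum.Decomposition.isInternal _
  have htop := hint.submodule_iSup_eq_top
  have hsup : (⊤ : Submodule ℂ (SuperAlg n))
      = ⨆ i ∈ Finset.range (n + 1), (⋀[ℂ]^i (Fin n → ℂ) : Submodule ℂ (SuperAlg n)) := by
    refine le_antisymm ?_ le_top
    rw [← htop]
    refine iSup_le fun i => ?_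
    rcases le_or_gt i n with hi | hi
    · exact le_biSup _ (Finset.mem_range.mpr (by omega))
    · rw [superAlg_exteriorPower_eq_bot n i hi]
      exact bot_le
  rw [hsup]
  exact Submodule.fg_biSup _ _ fun i _ => hfg i

/-- A norm on the finite-dimensional complex vector space `Λ`, transported from `ℂ^{2ⁿ}` by a
choice of basis.  (All norms on a finite-dimensional complex vector space are equivalent, so
the notions of holomorphy and derivative below do not depend on this choice; holomorphy is
equivalent to componentwise complex analyticity with respect to any basis.) -/
instance superAlg_normedAddCommGroup (n : ℕ) : NormedAddCommGroup (SuperAlg n) :=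
  NormedAddCommGroup.induced (SuperAlg n)
    (Fin (Module.finrank ℂ (SuperAlg n)) → ℂ)
    (Module.finBasis ℂ (SuperAlg n)).equivFun
    (Module.finBasis ℂ (SuperAlg n)).equivFun.injective

instance superAlg_normedSpace (n : ℕ) : NormedSpace ℂ (SuperAlg n) :=
  NormedSpace.induced ℂ (SuperAlg n) (Fin (Module.finrank ℂ (SuperAlg n)) → ℂ)
    (Module.finBasis ℂ (SuperAlg n)).equivFun

/-- The reduction `λ ↦ λ^red`: the image of `λ ∈ Λ` under the augmentation `Λ → ℂ`
(quotienting out nilpotents). -/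
def reduce (n : ℕ) (a : SuperAlg n) : ℂ :=
  ExteriorAlgebra.algebraMapInv (R := ℂ) (M := Fin n → ℂ) a

/-- The `k`-th odd generator of the exterior algebra `Λ N = ⋀ ℂ^N`. -/
def gen16 (N : ℕ) (k : Fin N) : SuperAlg N :=
  ExteriorAlgebra.ι ℂ (Pi.single k (1 : ℂ))

/-- In `A = ⋀ ℂ^{n+g'}` (the exterior algebra `Λ` with the extra odd generators
`η₁, …, η_{g'}` adjoined), the generator `η_α` is the `(n+α)`-th generator. -/
def eta (n g' : ℕ) (α : Fin g') : SuperAlg (n + g') :=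
  gen16 (n + g') (Fin.natAdd n α)

/-- The copy of `Λ` inside `A = ⋀ ℂ^{n+g'}`: the subalgebra generated by the first `n` odd
generators `β₁, …, βₙ`. -/
def lambdaSub (n g' : ℕ) : Subalgebra ℂ (SuperAlg (n + g')) :=
  Algebra.adjoin ℂ (Set.range fun k : Fin n => gen16 (n + g') (Fin.castAdd g' k))

/-- The nilpotent part `λ − λ^red` of an element of the exterior algebra. -/
def nilpPart (N : ℕ) (a : SuperAlg N) : SuperAlg N :=
  a - algebraMap ℂ (SuperAlg N) (reduce N a)

/-- The partial derivative `∂H/∂z_k` of a function `H : ℂᵍ → A`. -/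
def pDeriv (N g : ℕ) (k : Fin g) (H : (Fin g → ℂ) → SuperAlg N) :
    (Fin g → ℂ) → SuperAlg N :=
  fun z => deriv (fun t => H (Function.update z k t)) (z k)

/-- The iterated partial derivative `∂^m H` for a multi-index `m`. -/
def mDeriv (N g : ℕ) (m : Fin g → ℕ) (H : (Fin g → ℂ) → SuperAlg N) :
    (Fin g → ℂ) → SuperAlg N :=
  (List.finRange g).foldr (fun k F => (pDeriv N g k)^[m k] F) H

/-- The Taylor-shifted value `H(z + w)` for an even shift vector `w` with reduced parts `r_i`
and nilpotent parts `ν_i`: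
`H(z + w) := Σ_m (1/m!)·(∂^m H)(z + r)·ν^m`, summing over multi-indices `m`.  Since each
`ν_i` lies in the nilpotent ideal `𝔪` of `A = ⋀ ℂ^N` and `𝔪^{N+1} = 0`, all terms with some
`m_i > N` vanish, so the sum may be truncated to the finite box `m_i ≤ N`. -/
def shiftEval (N g : ℕ) (H : (Fin g → ℂ) → SuperAlg N) (w : Fin g → SuperAlg N)
    (z : Fin g → ℂ) : SuperAlg N :=
  ∑ m ∈ Fintype.piFinset (fun _ : Fin g => Finset.range (N + 1)),
    (((∏ i, (m i).factorial : ℕ) : ℂ))⁻¹ •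
      (mDeriv N g m H (fun i => z i + reduce N (w i)) *
        ((List.finRange g).map fun i => nilpPart N (w i) ^ m i).prod)

/-- The (finite) exponential series of a nilpotent element of `A`. -/
def nexp (N : ℕ) (a : SuperAlg N) : SuperAlg N :=
  ∑ m ∈ Finset.range (N + 1), ((m.factorial : ℂ))⁻¹ • a ^ m

/-- The multiplier `exp(−πi(2z_i + Z_{ii})) = e^{−2πi z_i}·e^{−πi r_{ii}}·exp(−πi ν_{ii})`,
where `r_{ii}` and `ν_{ii}` are the reduced and nilpotent parts of `Z_{ii}` and the last
factor is the finite exponential series of the nilpotent element `−πi·ν_{ii}`. -/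
def expFactor (N g : ℕ) (Ze : Matrix (Fin g) (Fin g) (SuperAlg N)) (i : Fin g)
    (z : Fin g → ℂ) : SuperAlg N :=
  Complex.exp (-(Real.pi : ℂ) * Complex.I * (2 * z i + reduce N (Ze i i))) •
    nexp N (algebraMap ℂ (SuperAlg N) (-(Real.pi : ℂ) * Complex.I) * nilpPart N (Ze i i))

/-- `H : ℂᵍ → A` is a super theta function for `(Z_e, Z_o)` (the dependence on `Z_o` being
through the algebra endomorphisms `φ_i`, which fix `Λ` and send `η_α ↦ η_α + Z_{iα}`):
`H` is holomorphic, `H(z + e_j) = H(z)` for every standard basis vector `e_j`, and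
`φ_i(H)(z + Z_i) = exp(−πi(2z_i + Z_{ii}))·H(z)` for every `i`. -/
def IsSuperTheta (N g : ℕ) (φ : Fin g → (SuperAlg N →ₐ[ℂ] SuperAlg N))
    (Ze : Matrix (Fin g) (Fin g) (SuperAlg N)) (H : (Fin g → ℂ) → SuperAlg N) : Prop :=
  Differentiable ℂ H ∧
  (∀ (j : Fin g) (z : Fin g → ℂ), H (z + Pi.single j 1) = H z) ∧
  (∀ (i : Fin g) (z : Fin g → ℂ),
    shiftEval N g (fun w => φ i (H w)) (fun k => Ze i k) z = expFactor N g Ze i z * H z)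

section Analytic

open Metric MeasureTheory

variable {E F : Type*} [NormedAddCommGroup E] [NormedSpace ℂ E] [FiniteDimensional ℂ E]
  [NormedAddCommGroup F] [NormedSpace ℂ F] [FiniteDimensional ℂ F]

theorem aux_line {f : E → F} (hf : Differentiable ℂ f) (z v : E) (t : ℂ) :
    HasDerivAt (fun t : ℂ => f (z + t • v)) (fderiv ℂ f (z + t • v) v) t := by
  have h1 : HasDerivAt (fun t : ℂ => z + t • v) v t := by
    simpa using ((hasDerivAt_id t).smul_const v).const_add z
  exact (hf (z + t • v)).hasFDerivAt.comp_hasDerivAt t h1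

theorem aux_bound {f : E → F} (hf : Differentiable ℂ f) (z : E) (M : ℝ)
    (hM : ∀ y ∈ closedBall z 1, ‖f y‖ ≤ M) : ‖fderiv ℂ f z‖ ≤ M := by
  have hM0 : 0 ≤ M := (norm_nonneg _).trans (hM z (by simp))
  refine ContinuousLinearMap.opNorm_le_bound _ hM0 fun u => ?_
  rcases eq_or_ne u 0 with rfl | hu
  · simp
  have hu' : 0 < ‖u‖ := norm_pos_iff.mpr hu
  have h := Complex.norm_deriv_le_of_forall_mem_sphere_norm_le (c := 0) (R := ‖u‖⁻¹) (C := M)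
    (f := fun t : ℂ => f (z + t • u)) (inv_pos.mpr hu')
    (Differentiable.diffContOnCl fun t => (aux_line hf z u t).differentiableAt) (by
      intro t ht
      refine hM _ ?_
      simp only [mem_sphere_iff_norm, sub_zero] at ht
      simp [norm_smul, ht, hu'.ne'])
  rw [(aux_line hf z u 0).deriv] at h
  simpa using h

theorem aux_diff_apply {f : E → F} (hf : Differentiable ℂ f) (v : E) :
    Differentiable ℂ (fun z => fderiv ℂ f z v) := by
  have : ProperSpace E := FiniteDimensional.proper ℂ E
  have : CompleteSpace F := FiniteDimensional.complete ℂ F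
  have : CompleteSpace E := FiniteDimensional.complete ℂ E
  have hrep : (fun z => fderiv ℂ f z v) = fun z => (2 * Real.pi * Complex.I : ℂ)⁻¹ •
      ∫ t in (0 : ℝ)..2 * Real.pi, (deriv (circleMap 0 1) t * ((circleMap 0 1 t) ^ 2)⁻¹) •
        f (z + circleMap 0 1 t • v) := by
    funext z
    have h := DiffContOnCl.deriv_eq_smul_circleIntegral (c := 0) (R := 1)
      (f := fun t : ℂ => f (z + t • v)) one_pos
      (Differentiable.diffContOnCl fun t => (aux_line hf z v t).differentiableAt)
    rw [(aux_line hf z v 0).deriv] at h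
    simp only [zero_smul, add_zero] at h
    have hpi : (2 * Real.pi * Complex.I : ℂ) ≠ 0 := by simp [Real.pi_ne_zero]
    rw [← inv_smul_smul₀ hpi (fderiv ℂ f z v), ← h, circleIntegral]
    congr 1
    refine intervalIntegral.integral_congr fun t _ => ?_
    simp [smul_smul, zpow_neg]
  rw [hrep]
  refine Differentiable.const_smul (fun z₀ => ?_) _
  obtain ⟨M, hM⟩ := (isCompact_closedBall z₀ (1 + (1 + ‖v‖))).exists_bound_of_continuousOn
    hf.continuous.continuousOn
  have hcirc : ∀ t : ℝ, ‖circleMap 0 1 t‖ = 1 := fun t => by simp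
  have hcoef : ∀ t : ℝ, ‖deriv (circleMap 0 1) t * ((circleMap 0 1 t) ^ 2)⁻¹‖ = 1 := fun t => by
    simp
  have hcont : Continuous fun t : ℝ => deriv (circleMap 0 1) t * ((circleMap 0 1 t) ^ 2)⁻¹ := by
    have h0 : ∀ t : ℝ, circleMap 0 1 t ^ 2 ≠ 0 := fun t => by
      simp
    have h1 : Continuous (circleMap 0 1) := continuous_circleMap 0 1
    have : deriv (circleMap 0 1) = fun t => circleMap 0 1 t * Complex.I := by
      funext t; simp
    rw [this]
    exact (h1.mul continuous_const).mul ((h1.pow 2).inv₀ h0)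
  have hFc : ∀ x : E, Continuous fun t : ℝ =>
      (deriv (circleMap 0 1) t * ((circleMap 0 1 t) ^ 2)⁻¹) • f (x + circleMap 0 1 t • v) :=
    fun x => hcont.smul (hf.continuous.comp
      (continuous_const.add ((continuous_circleMap 0 1).smul continuous_const)))
  refine (intervalIntegral.hasFDerivAt_integral_of_dominated_of_fderiv_le
    (F := fun z t => (deriv (circleMap 0 1) t * ((circleMap 0 1 t) ^ 2)⁻¹) •
        f (z + circleMap 0 1 t • v))
    (F' := fun z t => (deriv (circleMap 0 1) t * ((circleMap 0 1 t) ^ 2)⁻¹) •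
        fderiv ℂ f (z + circleMap 0 1 t • v)) (bound := fun _ => M) (s := closedBall z₀ 1)
    (closedBall_mem_nhds z₀ one_pos) ?_ ?_ ?_ ?_ ?_ ?_).differentiableAt
  · exact Filter.Eventually.of_forall fun x => (hFc x).aestronglyMeasurable
  · exact (hFc z₀).intervalIntegrable _ _
  · borelize E
    borelize (E →L[ℂ] F)
    have : FiniteDimensional ℂ (E →L[ℂ] F) := inferInstance
    have : ProperSpace (E →L[ℂ] F) := FiniteDimensional.proper ℂ _
    refine Measurable.aestronglyMeasurable ?_
    refine hcont.measurable.smul ((measurable_fderiv ℂ f).comp ?_)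
    exact (continuous_const.add ((continuous_circleMap 0 1).smul continuous_const)).measurable
  · refine Filter.Eventually.of_forall fun t _ x hx => ?_
    rw [norm_smul, hcoef, one_mul]
    refine aux_bound hf _ M fun y hy => hM y ?_
    rw [mem_closedBall] at *
    calc dist y z₀ ≤ dist y (x + circleMap 0 1 t • v) + dist (x + circleMap 0 1 t • v) z₀ :=
          dist_triangle _ _ _
      _ ≤ dist y (x + circleMap 0 1 t • v) + (dist (x + circleMap 0 1 t • v) x + dist x z₀) := by
          gcongr; exact dist_triangle _ _ _
      _ ≤ 1 + (‖v‖ + 1) := by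
          gcongr
          rw [dist_eq_norm, add_sub_cancel_left, norm_smul, hcirc, one_mul]
      _ = _ := by ring
  · exact intervalIntegrable_const
  · refine Filter.Eventually.of_forall fun t _ x _ => ?_
    refine HasFDerivAt.const_smul ?_ _
    exact (hasFDerivAt_comp_add_right _).mpr (hf _).hasFDerivAt

theorem aux_diff_fderiv {f : E → F} (hf : Differentiable ℂ f) : Differentiable ℂ (fderiv ℂ f) := by
  have h2 : ContDiff ℂ 1 (fderiv ℂ f) := by
    rw [contDiff_clm_apply_iff]
    intro v
    rw [contDiff_one_iff_fderiv]
    refine ⟨aux_diff_apply hf v, ?_⟩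
    rw [continuous_clm_apply]
    intro w
    exact (aux_diff_apply (aux_diff_apply hf v) w).continuous
  exact h2.differentiable (by simp)

theorem aux_symm {f : E → F} (hf : Differentiable ℂ f) (z v w : E) :
    fderiv ℂ (fun x => fderiv ℂ f x v) z w = fderiv ℂ (fun x => fderiv ℂ f x w) z v := by
  have h := second_derivative_symmetric (f := f) (f' := fderiv ℂ f)
    (f'' := fderiv ℂ (fderiv ℂ f) z) (fun y => (hf y).hasFDerivAt)
    ((aux_diff_fderiv hf z).hasFDerivAt) v w
  have key : ∀ u : E, HasFDerivAt (fun x => fderiv ℂ f x u)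
      ((ContinuousLinearMap.apply ℂ F u).comp (fderiv ℂ (fderiv ℂ f) z)) z := fun u =>
    (ContinuousLinearMap.apply ℂ F u).hasFDerivAt.comp z (aux_diff_fderiv hf z).hasFDerivAt
  rw [(key v).fderiv, (key w).fderiv]
  simpa using h.symm

end Analytic

section Super

variable {N g : ℕ}

theorem pd_hasDerivAt {F : (Fin g → ℂ) → SuperAlg N} (hF : Differentiable ℂ F) (k : Fin g)
    (z : Fin g → ℂ) (t : ℂ) : HasDerivAt (fun t => F (Function.update z k t))
      (fderiv ℂ F (Function.update z k t) (Pi.single k 1)) t :=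
  (hF _).hasFDerivAt.comp_hasDerivAt t (hasDerivAt_update z k t)

theorem pd_eq {F : (Fin g → ℂ) → SuperAlg N} (hF : Differentiable ℂ F) (k : Fin g) :
    pDeriv N g k F = fun z => fderiv ℂ F z (Pi.single k 1) := by
  funext z
  rw [pDeriv, (pd_hasDerivAt hF k z (z k)).deriv, Function.update_eq_self]

theorem pd_has {F : (Fin g → ℂ) → SuperAlg N} (hF : Differentiable ℂ F) (k : Fin g)
    (z : Fin g → ℂ) : HasDerivAt (fun t => F (Function.update z k t)) (pDeriv N g k F z) (z k) := by
  have := pd_hasDerivAt hF k z (z k)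
  rw [pd_eq hF]
  simpa using this

theorem pd_has_shift {F : (Fin g → ℂ) → SuperAlg N} (hF : Differentiable ℂ F) (k : Fin g)
    (z r : Fin g → ℂ) : HasDerivAt (fun t => F (fun i => Function.update z k t i + r i))
      (pDeriv N g k F (fun i => z i + r i)) (z k) := by
  have h := HasDerivAt.comp_add_const (z k) (r k) (pd_has hF k (fun i => z i + r i))
  have he : (fun t => F (fun i => Function.update z k t i + r i)) =
      fun x => F (Function.update (fun i => z i + r i) k (x + r k)) := by
    funext t
    congr 1
    funext i
    rcases eq_or_ne i k with rfl | hi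
    · simp
    · simp [hi]
  rw [he]
  exact h

theorem pd_diff {F : (Fin g → ℂ) → SuperAlg N} (hF : Differentiable ℂ F) (k : Fin g) :
    Differentiable ℂ (pDeriv N g k F) := by
  rw [pd_eq hF]; exact aux_diff_apply hF _

theorem pd_comm {F : (Fin g → ℂ) → SuperAlg N} (hF : Differentiable ℂ F) (k l : Fin g) :
    pDeriv N g k (pDeriv N g l F) = pDeriv N g l (pDeriv N g k F) := by
  rw [pd_eq (pd_diff hF l), pd_eq (pd_diff hF k), pd_eq hF, pd_eq hF]
  funext z
  exact aux_symm hF z _ _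

theorem lin_diff (L : SuperAlg N →ₗ[ℂ] SuperAlg N) {F : (Fin g → ℂ) → SuperAlg N}
    (hF : Differentiable ℂ F) : Differentiable ℂ (fun z => L (F z)) :=
  fun z => (LinearMap.toContinuousLinearMap L).differentiableAt.comp z (hF z)

theorem lin_has (L : SuperAlg N →ₗ[ℂ] SuperAlg N) {f : ℂ → SuperAlg N} {f' : SuperAlg N} {t : ℂ}
    (hf : HasDerivAt f f' t) : HasDerivAt (fun z => L (f z)) (L f') t :=
  (LinearMap.toContinuousLinearMap L).hasFDerivAt.comp_hasDerivAt t hf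

theorem pd_lin (L : SuperAlg N →ₗ[ℂ] SuperAlg N) {F : (Fin g → ℂ) → SuperAlg N}
    (hF : Differentiable ℂ F) (k : Fin g) :
    pDeriv N g k (fun z => L (F z)) = fun z => L (pDeriv N g k F z) := by
  funext z
  exact (lin_has L (pd_has hF k z)).deriv

theorem pd_add {F G : (Fin g → ℂ) → SuperAlg N}
    (hF : Differentiable ℂ F) (hG : Differentiable ℂ G) (k : Fin g) :
    pDeriv N g k (fun z => F z + G z) = fun z => pDeriv N g k F z + pDeriv N g k G z := by
  funext z
  exact ((pd_has hF k z).add (pd_has hG k z)).deriv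

/-- Induction principle for a relation preserved by partial derivatives. -/
theorem md_rel (P : ((Fin g → ℂ) → SuperAlg N) → ((Fin g → ℂ) → SuperAlg N) → Prop)
    (hP : ∀ F G k, P F G → P (pDeriv N g k F) (pDeriv N g k G)) (m : Fin g → ℕ)
    (F G : (Fin g → ℂ) → SuperAlg N) (h : P F G) : P (mDeriv N g m F) (mDeriv N g m G) := by
  unfold mDeriv
  induction List.finRange g with
  | nil => exact h
  | cons k l ih =>
    simp only [List.foldr_cons]
    generalize m k = p
    induction p with
    | zero => exact ih
    | succ p ihp =>
      rw [Function.iterate_succ_apply', Function.iterate_succ_apply']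
      exact hP _ _ k ihp

theorem md_diff {F : (Fin g → ℂ) → SuperAlg N} (hF : Differentiable ℂ F) (m : Fin g → ℕ) :
    Differentiable ℂ (mDeriv N g m F) :=
  md_rel (fun F _ => Differentiable ℂ F) (fun _ _ k h => pd_diff h k) m F F hF

theorem md_lin (L : SuperAlg N →ₗ[ℂ] SuperAlg N) {F : (Fin g → ℂ) → SuperAlg N}
    (hF : Differentiable ℂ F) (m : Fin g → ℕ) :
    mDeriv N g m (fun z => L (F z)) = fun z => L (mDeriv N g m F z) :=
  (md_rel (fun F G => Differentiable ℂ F ∧ G = fun z => L (F z))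
    (fun F G k h => ⟨pd_diff h.1 k, by rw [h.2, pd_lin L h.1]⟩) m F _ ⟨hF, rfl⟩).2

theorem md_pd {F : (Fin g → ℂ) → SuperAlg N} (hF : Differentiable ℂ F) (m : Fin g → ℕ)
    (k : Fin g) : mDeriv N g m (pDeriv N g k F) = pDeriv N g k (mDeriv N g m F) :=
  (md_rel (fun F G => Differentiable ℂ F ∧ G = pDeriv N g k F)
    (fun F G l h => ⟨pd_diff h.1 l, by rw [h.2, pd_comm h.1]⟩) m F _ ⟨hF, rfl⟩).2

theorem pd_sum {ι : Type*} (s : Finset ι) {F : ι → (Fin g → ℂ) → SuperAlg N}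
    (hF : ∀ i, Differentiable ℂ (F i)) (k : Fin g) :
    pDeriv N g k (fun z => ∑ i ∈ s, F i z) = fun z => ∑ i ∈ s, pDeriv N g k (F i) z := by
  funext z
  exact (HasDerivAt.fun_sum fun i _ => pd_has (hF i) k z).deriv

theorem md_sum {ι : Type*} (s : Finset ι) {F : ι → (Fin g → ℂ) → SuperAlg N}
    (hF : ∀ i, Differentiable ℂ (F i)) (m : Fin g → ℕ) :
    mDeriv N g m (fun z => ∑ i ∈ s, F i z) = fun z => ∑ i ∈ s, mDeriv N g m (F i) z := by
  unfold mDeriv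
  suffices h : (∀ i, Differentiable ℂ
      ((List.finRange g).foldr (fun k F => (pDeriv N g k)^[m k] F) (F i))) ∧
      (List.finRange g).foldr (fun k F => (pDeriv N g k)^[m k] F) (fun z => ∑ i ∈ s, F i z) =
      fun z => ∑ i ∈ s, (List.finRange g).foldr (fun k F => (pDeriv N g k)^[m k] F) (F i) z from h.2
  induction List.finRange g with
  | nil => exact ⟨hF, rfl⟩
  | cons k l ih =>
    simp only [List.foldr_cons]
    generalize m k = p
    induction p with
    | zero => exact ih
    | succ p ihp =>
      simp only [Function.iterate_succ_apply']
      exact ⟨fun i => pd_diff (ihp.1 i) k, by rw [ihp.2, pd_sum s ihp.1]⟩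

theorem sh_sum {ι : Type*} (s : Finset ι) {F : ι → (Fin g → ℂ) → SuperAlg N}
    (hF : ∀ i, Differentiable ℂ (F i)) (w : Fin g → SuperAlg N) (z : Fin g → ℂ) :
    shiftEval N g (fun z => ∑ i ∈ s, F i z) w z = ∑ i ∈ s, shiftEval N g (F i) w z := by
  unfold shiftEval
  rw [Finset.sum_comm]
  refine Finset.sum_congr rfl fun m _ => ?_
  rw [md_sum s hF, Finset.sum_mul, Finset.smul_sum]

theorem sh_add {F G : (Fin g → ℂ) → SuperAlg N}
    (hF : Differentiable ℂ F) (hG : Differentiable ℂ G) (w : Fin g → SuperAlg N)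
    (z : Fin g → ℂ) :
    shiftEval N g (fun z => F z + G z) w z = shiftEval N g F w z + shiftEval N g G w z := by
  have h := sh_sum Finset.univ (F := fun b : Bool => if b then F else G)
    (by intro b; cases b <;> simpa) w z
  simpa using h

theorem sh_mul {F : (Fin g → ℂ) → SuperAlg N} (hF : Differentiable ℂ F) (a : SuperAlg N)
    (w : Fin g → SuperAlg N) (z : Fin g → ℂ) :
    shiftEval N g (fun z => a * F z) w z = a * shiftEval N g F w z := by
  unfold shiftEval
  rw [Finset.mul_sum]
  refine Finset.sum_congr rfl fun m _ => ?_
  have := md_lin (LinearMap.mulLeft ℂ a) hF m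
  simp only [LinearMap.mulLeft_apply] at this
  rw [this, mul_smul_comm, mul_assoc]

theorem sh_pd {F : (Fin g → ℂ) → SuperAlg N} (hF : Differentiable ℂ F) (k : Fin g)
    (w : Fin g → SuperAlg N) (z : Fin g → ℂ) :
    HasDerivAt (fun t => shiftEval N g F w (Function.update z k t))
      (shiftEval N g (pDeriv N g k F) w z) (z k) := by
  unfold shiftEval
  refine HasDerivAt.fun_sum fun m _ => lin_has (LinearMap.lsmul ℂ (SuperAlg N) _) ?_
  rw [md_pd hF]
  exact lin_has (LinearMap.mulRight ℂ _) (pd_has_shift (md_diff hF m) k z _)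

theorem even_central {a : SuperAlg N} (ha : a ∈ evenPart N) (b : SuperAlg N) : Commute a b := by
  have hι : ∀ (v u : Fin N → ℂ), ExteriorAlgebra.ι ℂ v * ExteriorAlgebra.ι ℂ u =
      -(ExteriorAlgebra.ι ℂ u * ExteriorAlgebra.ι ℂ v) := fun v u =>
    eq_neg_of_add_eq_zero_left (ExteriorAlgebra.ι_add_mul_swap v u)
  have key : ∀ v : Fin N → ℂ, Commute a (ExteriorAlgebra.ι ℂ v) := by
    intro v
    unfold evenPart at ha
    induction a, ha using CliffordAlgebra.even_induction with
    | algebraMap r => exact Algebra.commutes r _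
    | add x y hx hy ihx ihy => exact ihx.add_left ihy
    | ι_mul_ι_mul m₁ m₂ x hx ih =>
      refine Commute.mul_left ?_ ih
      change ExteriorAlgebra.ι ℂ m₁ * ExteriorAlgebra.ι ℂ m₂ * ExteriorAlgebra.ι ℂ v =
        ExteriorAlgebra.ι ℂ v * (ExteriorAlgebra.ι ℂ m₁ * ExteriorAlgebra.ι ℂ m₂)
      rw [mul_assoc, hι m₂ v, mul_neg, ← mul_assoc, hι m₁ v, neg_mul, neg_neg, mul_assoc]
  induction b using ExteriorAlgebra.induction with
  | algebraMap r => exact (Algebra.commutes r a).symm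
  | ι x => exact key x
  | mul x y hx hy => exact hx.mul_right hy
  | add x y hx hy => exact hx.add_right hy

theorem nexp_central {a : SuperAlg N} (ha : a ∈ evenPart N) (c : ℂ) (b : SuperAlg N) :
    Commute (nexp N (algebraMap ℂ (SuperAlg N) c * nilpPart N a)) b := by
  unfold nexp
  refine Commute.sum_left _ _ _ fun m _ => Commute.smul_left (Commute.pow_left ?_ m) _
  refine Commute.mul_left (Algebra.commutes _ _) ?_
  exact Commute.sub_left (even_central ha b) (Algebra.commutes _ _)

theorem theta_main (φ : Fin g → (SuperAlg N →ₐ[ℂ] SuperAlg N))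
    (Ze : Matrix (Fin g) (Fin g) (SuperAlg N)) (η : SuperAlg N) (ζ : Fin g → SuperAlg N)
    (hZe : ∀ i, Ze i i ∈ evenPart N) (hφfix : ∀ i k, φ i (ζ k) = ζ k)
    (hφeta : ∀ i, φ i η = η + ζ i) (H : (Fin g → ℂ) → SuperAlg N)
    (hH : IsSuperTheta N g φ Ze H) :
    IsSuperTheta N g φ Ze (fun z => η * H z +
        (2 * (Real.pi : ℂ) * Complex.I)⁻¹ • ∑ k : Fin g, ζ k * pDeriv N g k H z) := by
  obtain ⟨hd, hper, hth⟩ := hH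
  set c : ℂ := (2 * (Real.pi : ℂ) * Complex.I)⁻¹ with hc
  have hc0 : (2 * (Real.pi : ℂ) * Complex.I) ≠ 0 := by
    simp [Real.pi_ne_zero]
  refine ⟨?_, ?_, ?_⟩
  · refine (lin_diff (LinearMap.mulLeft ℂ _) hd).add (lin_diff (LinearMap.lsmul ℂ (SuperAlg N) c) ?_)
    refine Differentiable.fun_sum fun k _ => ?_
    exact lin_diff (LinearMap.mulLeft ℂ _) (pd_diff hd k)
  · intro j z
    have hp : ∀ k, pDeriv N g k H (z + Pi.single j 1) = pDeriv N g k H z := by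
      intro k
      rw [pd_eq hd]
      have h := fderiv_comp_add_right (𝕜 := ℂ) (f := H) (x := z) (Pi.single j (1 : ℂ))
      have h2 : (fun x => H (x + Pi.single j 1)) = H := funext fun x => hper j x
      rw [h2] at h
      simp only [h]
    simp only [hp, hper]
  · intro i z
    set w : Fin g → SuperAlg N := fun k => Ze i k with hw
    set G : (Fin g → ℂ) → SuperAlg N := fun z => φ i (H z) with hG
    have hGd : Differentiable ℂ G := lin_diff (φ i).toLinearMap hd
    have hGp : ∀ k, pDeriv N g k G = fun z => φ i (pDeriv N g k H z) := fun k =>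
      pd_lin (φ i).toLinearMap hd k
    have hfun : (fun z => φ i (η * H z + c • ∑ k : Fin g, ζ k * pDeriv N g k H z)) =
        fun z => (η + ζ i) * G z + ∑ k : Fin g, (c • ζ k) * pDeriv N g k G z := by
      funext z
      simp only [map_add, map_mul, hφeta, map_smul, map_sum, hφfix, hGp,
        Finset.smul_sum, smul_mul_assoc]
      rfl
    have hd1 : Differentiable ℂ (fun z => (η + ζ i) * G z) :=
      lin_diff (LinearMap.mulLeft ℂ (η + ζ i)) hGd
    have hd2 : ∀ k, Differentiable ℂ (fun z => (c • ζ k) * pDeriv N g k G z) := fun k =>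
      lin_diff (LinearMap.mulLeft ℂ (c • ζ k)) (pd_diff hGd k)
    rw [hfun, sh_add hd1 (Differentiable.fun_sum fun k _ => hd2 k),
      sh_mul hGd, sh_sum _ hd2]
    have hcen : ∀ b, Commute (expFactor N g Ze i z) b := fun b =>
      (nexp_central (hZe i) _ b).smul_left _
    have hS : ∀ k, shiftEval N g (pDeriv N g k G) w z =
        (if k = i then -(2 * (Real.pi : ℂ) * Complex.I) else 0) • (expFactor N g Ze i z * H z) +
          expFactor N g Ze i z * pDeriv N g k H z := by
      intro k
      refine (sh_pd hGd k w z).unique ?_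
      have h1 : (fun t => shiftEval N g G w (Function.update z k t)) = fun t =>
          Complex.exp (-(Real.pi : ℂ) * Complex.I *
            (2 * (Function.update z k t) i + reduce N (Ze i i))) •
          (nexp N (algebraMap ℂ (SuperAlg N) (-(Real.pi : ℂ) * Complex.I) * nilpPart N (Ze i i))
            * H (Function.update z k t)) := by
        funext t
        rw [hG, hw, hth i, expFactor, smul_mul_assoc]
      rw [h1]
      have h2 : HasDerivAt (fun t => (Function.update z k t) i) (if k = i then 1 else 0) (z k) := by
        rcases eq_or_ne k i with rfl | hki
        · simpa using hasDerivAt_id' (z k)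
        · simpa [hki, hki.symm] using hasDerivAt_const (z k) (z i)
      have h3 := (((h2.const_mul 2).add_const (reduce N (Ze i i))).const_mul
        (-(Real.pi : ℂ) * Complex.I)).cexp
      have h4 := h3.smul (lin_has (LinearMap.mulLeft ℂ (nexp N (algebraMap ℂ (SuperAlg N)
        (-(Real.pi : ℂ) * Complex.I) * nilpPart N (Ze i i)))) (pd_has hd k z))
      refine HasDerivAt.congr_deriv h4 ?_
      symm
      simp only [Function.update_eq_self, LinearMap.mulLeft_apply, expFactor, smul_mul_assoc]
      rw [add_comm]
      congr 1
      rw [smul_smul]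
      congr 1
      split_ifs <;> ring
    have hm : ∀ k, shiftEval N g (fun z => (c • ζ k) * pDeriv N g k G z) w z
        = (if k = i then -(ζ i * (expFactor N g Ze i z * H z)) else 0) +
          expFactor N g Ze i z * (c • (ζ k * pDeriv N g k H z)) := by
      intro k
      rw [sh_mul (pd_diff hGd k), hS, mul_add]
      congr 1
      · split_ifs with h
        · subst h
          rw [mul_smul_comm, smul_mul_assoc, smul_smul, neg_mul, mul_inv_cancel₀ hc0, neg_smul,
            one_smul]
        · simp
      · rw [← mul_assoc, ← (hcen _).eq, mul_assoc, smul_mul_assoc]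
    simp only [hm]
    rw [hth i z, Finset.sum_add_distrib, Finset.sum_ite_eq' , if_pos (Finset.mem_univ _),
      ← Finset.mul_sum, ← Finset.smul_sum, mul_add, add_mul, ← mul_assoc (η),
      ← (hcen (η)).eq, mul_assoc]
    abel

end Super

/-- If `H : ℂᵍ → A` is a super theta function for `(Z_e, Z_o)` (with
`g = g'+1`, `Z_e` even, `Z_o` odd, entries from `Λ ⊆ A`), then for each `α` the function
`H_α := η_α·H + (1/(2πi))·Σ_k Z_{kα}·(∂H/∂z_k)` is again a super theta function for
`(Z_e, Z_o)`: it satisfies `H_α(z + e_j) = H_α(z)` and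
`φ_i(H_α)(z + Z_i) = exp(−πi(2z_i + Z_{ii}))·H_α(z)` for all `i`, `z`. -/
theorem statement16 (n g' : ℕ)
    (Ze : Matrix (Fin (g' + 1)) (Fin (g' + 1)) (SuperAlg (n + g')))
    (Zo : Matrix (Fin (g' + 1)) (Fin g') (SuperAlg (n + g')))
    (hZe : ∀ i j, Ze i j ∈ lambdaSub n g' ∧ Ze i j ∈ evenPart (n + g'))
    (hZo : ∀ i α, Zo i α ∈ lambdaSub n g' ∧ Zo i α ∈ oddPart (n + g'))
    (φ : Fin (g' + 1) → (SuperAlg (n + g') →ₐ[ℂ] SuperAlg (n + g')))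
    (hφfix : ∀ (i : Fin (g' + 1)) (a : SuperAlg (n + g')), a ∈ lambdaSub n g' → φ i a = a)
    (hφeta : ∀ (i : Fin (g' + 1)) (α : Fin g'), φ i (eta n g' α) = eta n g' α + Zo i α)
    (H : (Fin (g' + 1) → ℂ) → SuperAlg (n + g'))
    (hH : IsSuperTheta (n + g') (g' + 1) φ Ze H) (α : Fin g') :
    IsSuperTheta (n + g') (g' + 1) φ Ze
      (fun z => eta n g' α * H z +
        (2 * (Real.pi : ℂ) * Complex.I)⁻¹ •
          ∑ k : Fin (g' + 1), Zo k α * pDeriv (n + g') (g' + 1) k H z) := by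
  exact theta_main φ Ze (eta n g' α) (fun k => Zo k α) (fun i => (hZe i i).2)
    (fun i k => hφfix i _ (hZo k α).1) (fun i => hφeta i α) H hH

end
end
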